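/- arXiv:1310.2648 — 9 statements merged into one kernel-verified Lean document; each statement's English description precedes it below -/
import Mathlib

section
/- Let Pr be a pmf on S and let P be the conditional pmf generated by Pr. Then for every player i ∈ {1,…,N}: ∑_{ω∈Ω} ∑_{α∈𝒜} π(ω)P(α|ω)û_i(α, ω) = ∑_{s∈S} Pr(s)h_i(s). -/
open Finset

/-! For a fixed event `ω`, the law `P(· | ω)` is the image of `Pr` under `s ↦ b^{(s)}(ω)`, so
averaging a function of the action against it is averaging over `s` its value at `b^{(s)}(ω)`.
Averaging over `ω` and exchanging the two sums gives the result. -/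

section

variable {R Ω 𝒜 S : Type*}

/-- The conditional mass function on actions generated by `p`, an arbitrary weight function on
strategies, where strategy `s` plays `b s ω` at the event `ω`. -/
def generatedCondMass [Fintype S] [DecidableEq 𝒜] [NonAssocSemiring R]
    (b : S → Ω → 𝒜) (p : S → R) (ω : Ω) (α : 𝒜) : R :=
  ∑ s, p s * if b s ω = α then 1 else 0

/-- The expected utility of the strategy `s`, written `h_i(s)` in the paper, for a single player's
utility function `u` and an arbitrary weight function `π` on events, where `s` plays `b s ω` at
the event `ω`. -/
def pureExpectedUtility [Fintype Ω] [NonUnitalNonAssocSemiring R]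
    (π : Ω → R) (b : S → Ω → 𝒜) (u : 𝒜 → Ω → R) (s : S) : R :=
  ∑ ω, π ω * u (b s ω) ω

theorem sum_generatedCondMass_mul [Fintype 𝒜] [Fintype S] [DecidableEq 𝒜] [NonAssocSemiring R]
    (b : S → Ω → 𝒜) (p : S → R) (ω : Ω) (f : 𝒜 → R) :
    ∑ α, generatedCondMass b p ω α * f α = ∑ s, p s * f (b s ω) := by
  simp only [generatedCondMass, sum_mul]
  rw [sum_comm]
  simp only [mul_ite, mul_one, mul_zero, ite_mul, zero_mul, sum_ite_eq, mem_univ, if_true]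

theorem statement1_general [Fintype Ω] [Fintype 𝒜] [Fintype S] [DecidableEq 𝒜] [CommSemiring R]
    (π : Ω → R) (b : S → Ω → 𝒜) (p : S → R) (u : 𝒜 → Ω → R) :
    ∑ ω, ∑ α, π ω * generatedCondMass b p ω α * u α ω =
      ∑ s, p s * pureExpectedUtility π b u s :=
  calc ∑ ω, ∑ α, π ω * generatedCondMass b p ω α * u α ω
      = ∑ ω, π ω * ∑ s, p s * u (b s ω) ω := by
        simp only [mul_assoc, ← mul_sum, sum_generatedCondMass_mul b p _ (u · _)]
    _ = ∑ s, ∑ ω, p s * (π ω * u (b s ω) ω) := by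
        simp only [mul_sum, mul_left_comm (π _)]
        exact sum_comm
    _ = ∑ s, p s * pureExpectedUtility π b u s := by
        simp only [pureExpectedUtility, mul_sum]

end

/-- If `P` is the conditional pmf generated by the pmf `Pr` on pure-strategy
profiles, then for every player `i`,
`∑_ω ∑_α π(ω) P(α|ω) ûᵢ(α,ω) = ∑_s Pr(s) hᵢ(s)`,
where `hᵢ(s) = ∑_ω π(ω) ûᵢ(b^{(s)}(ω), ω)`. -/
theorem statement1
    (N : ℕ) (hN : 1 ≤ N)
    (Ω0 : Type) (Ωp : Fin N → Type) (A : Fin N → Type)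
    [Fintype Ω0] [Nonempty Ω0]
    [∀ i, Fintype (Ωp i)] [∀ i, Nonempty (Ωp i)] [∀ i, DecidableEq (Ωp i)]
    [∀ i, Fintype (A i)] [∀ i, Nonempty (A i)] [∀ i, DecidableEq (A i)]
    (π : Ω0 × (∀ j, Ωp j) → ℝ)
    (hπ0 : ∀ ω, 0 ≤ π ω) (hπ1 : ∑ ω : Ω0 × (∀ j, Ωp j), π ω = 1)
    (U : ∀ _ : Fin N, (∀ j, A j) → Ω0 × (∀ j, Ωp j) → ℝ)
    (umax : Fin N → ℝ) (humax : ∀ i, 0 ≤ umax i)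
    (hU : ∀ i α ω, U i α ω ∈ Set.Icc 0 (umax i))
    (Pr : (∀ j, Ωp j → A j) → ℝ)
    (hPr0 : ∀ s, 0 ≤ Pr s) (hPr1 : ∑ s : ∀ j, Ωp j → A j, Pr s = 1)
    (P : Ω0 × (∀ j, Ωp j) → (∀ j, A j) → ℝ)
    (hgen : ∀ ω α, P ω α =
      ∑ s : ∀ j, Ωp j → A j, Pr s * (if (fun j => s j (ω.2 j)) = α then 1 else 0)) :
    ∀ i : Fin N,
      ∑ ω : Ω0 × (∀ j, Ωp j), ∑ α : ∀ j, A j, π ω * P ω α * U i α ω =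
      ∑ s : ∀ j, Ωp j → A j, Pr s *
        (∑ ω : Ω0 × (∀ j, Ωp j), π ω * U i (fun j => s j (ω.2 j)) ω) := by
  obtain rfl : P = generatedCondMass (fun s ω j => s j (ω.2 j)) Pr := funext₂ hgen
  exact fun i => statement1_general π _ Pr (U i)
end

section
/- Let Pr be a pmf on S and let P be the conditional pmf generated by Pr. Then for every player i ∈ {1,…,N} and every pure strategy r ∈ S_i: ∑_{ω∈Ω} ∑_{α∈𝒜} π(ω)P(α|ω)û_i((r(ω_i), α_{-i}), ω) = ∑_{s∈S} Pr(s)h_i(r, s_{-i}). -/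
open Finset

/-!
Conditionally on `ω`, the law `P(· | ω)` is the image of `Pr` under `s ↦ b^{(s)}(ω)`, so averaging
any function of `(α, ω)` against `π` and `P` is the same as averaging over `s` its value at
`(b^{(s)}(ω), ω)`. Apply this to `ûᵢ` after player `i`'s deviation and use that deviating from the
recommended action amounts to deviating in the profile:
`(r(ωᵢ), b^{(s)}(ω)_{-i}) = b^{(r, s_{-i})}(ω)`.
-/

section ExpectedUtility

variable {Ω S α R : Type*}

/-- The expected utility of the decision rule `f` when events have weights `π`. For
`f = b^{(s)}` this is the paper's `hᵢ(s)`. -/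
def expectedUtility [Fintype Ω] [NonUnitalNonAssocSemiring R] (π : Ω → R) (u : α → Ω → R)
    (f : Ω → α) : R :=
  ∑ ω, π ω * u (f ω) ω

variable [Fintype S] [DecidableEq α]

/-- `P` is the conditional mass function generated by weights `w` on a finite family `b` of decision
rules: `P ω a` (the paper's `P(a|ω)`) is the total weight of the rules selecting `a` at `ω`. -/
def IsMixture [NonAssocSemiring R] (P : Ω → α → R) (w : S → R) (b : S → Ω → α) : Prop :=
  ∀ ω a, P ω a = ∑ s, w s * if b s ω = a then 1 else 0

theorem IsMixture.sum_mul_eq [Fintype α] [NonAssocSemiring R] {P : Ω → α → R} {w : S → R}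
    {b : S → Ω → α} (hP : IsMixture P w b) (ω : Ω) (g : α → R) :
    ∑ a, P ω a * g a = ∑ s, w s * g (b s ω) := by
  simp_rw [hP ω, sum_mul]
  rw [sum_comm]
  simp

theorem IsMixture.sum_sum_mul_eq_sum_mul_expectedUtility [Fintype Ω] [Fintype α] [CommSemiring R]
    {P : Ω → α → R} {w : S → R} {b : S → Ω → α} (hP : IsMixture P w b) (π : Ω → R)
    (u : α → Ω → R) :
    ∑ ω, ∑ a, π ω * P ω a * u a ω = ∑ s, w s * expectedUtility π u (b s) :=
  calc
    _ = ∑ ω, π ω * ∑ s, w s * u (b s ω) ω := by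
      simp_rw [mul_assoc, ← mul_sum, hP.sum_mul_eq _ (u · _)]
    _ = ∑ s, ∑ ω, w s * (π ω * u (b s ω) ω) := by
      simp_rw [mul_sum, mul_left_comm (π _)]
      exact sum_comm
    _ = ∑ s, w s * expectedUtility π u (b s) := by
      simp_rw [expectedUtility, mul_sum]

end ExpectedUtility

section Deviation

variable {ι : Type*} [DecidableEq ι] {X A : ι → Type*}

theorem piMap_update_left (s : ∀ j, X j → A j) (i : ι) (r : X i → A i) (x : ∀ j, X j) :
    Pi.map (Function.update s i r) x = Function.update (Pi.map s x) i (r (x i)) :=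
  funext fun j ↦ Function.apply_update (fun k (t : X k → A k) ↦ t (x k)) s i r j

theorem statement2_general {Ω R : Type*} [Fintype ι] [Fintype Ω] [∀ j, Fintype (X j)]
    [∀ j, DecidableEq (X j)] [∀ j, Fintype (A j)] [∀ j, DecidableEq (A j)] [CommSemiring R]
    {signal : Ω → ∀ j, X j} {P : Ω → (∀ j, A j) → R} {Pr : (∀ j, X j → A j) → R}
    (hP : IsMixture P Pr fun s ω ↦ Pi.map s (signal ω)) (π : Ω → R) (u : (∀ j, A j) → Ω → R)
    (i : ι) (r : X i → A i) :
    ∑ ω, ∑ α, π ω * P ω α * u (Function.update α i (r (signal ω i))) ω =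
      ∑ s, Pr s * expectedUtility π u fun ω ↦ Pi.map (Function.update s i r) (signal ω) := by
  simp_rw [hP.sum_sum_mul_eq_sum_mul_expectedUtility π
    fun α ω ↦ u (Function.update α i (r (signal ω i))) ω, expectedUtility, piMap_update_left]

end Deviation

/-- If `P` is the conditional pmf generated by the pmf `Pr` on pure-strategy
profiles, then for every player `i` and every pure strategy `r ∈ Sᵢ`,
`∑_ω ∑_α π(ω) P(α|ω) ûᵢ((r(ωᵢ), α_{-i}), ω) = ∑_s Pr(s) hᵢ(r, s_{-i})`. -/
theorem statement2
    (N : ℕ) (hN : 1 ≤ N)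
    (Ω0 : Type) (Ωp : Fin N → Type) (A : Fin N → Type)
    [Fintype Ω0] [Nonempty Ω0]
    [∀ i, Fintype (Ωp i)] [∀ i, Nonempty (Ωp i)] [∀ i, DecidableEq (Ωp i)]
    [∀ i, Fintype (A i)] [∀ i, Nonempty (A i)] [∀ i, DecidableEq (A i)]
    (π : Ω0 × (∀ j, Ωp j) → ℝ)
    (hπ0 : ∀ ω, 0 ≤ π ω) (hπ1 : ∑ ω : Ω0 × (∀ j, Ωp j), π ω = 1)
    (U : ∀ _ : Fin N, (∀ j, A j) → Ω0 × (∀ j, Ωp j) → ℝ)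
    (umax : Fin N → ℝ) (humax : ∀ i, 0 ≤ umax i)
    (hU : ∀ i α ω, U i α ω ∈ Set.Icc 0 (umax i))
    (Pr : (∀ j, Ωp j → A j) → ℝ)
    (hPr0 : ∀ s, 0 ≤ Pr s) (hPr1 : ∑ s : ∀ j, Ωp j → A j, Pr s = 1)
    (P : Ω0 × (∀ j, Ωp j) → (∀ j, A j) → ℝ)
    (hgen : ∀ ω α, P ω α =
      ∑ s : ∀ j, Ωp j → A j, Pr s * (if (fun j => s j (ω.2 j)) = α then 1 else 0)) :
    ∀ (i : Fin N) (r : Ωp i → A i),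
      ∑ ω : Ω0 × (∀ j, Ωp j), ∑ α : ∀ j, A j,
        π ω * P ω α * U i (Function.update α i (r (ω.2 i))) ω =
      ∑ s : ∀ j, Ωp j → A j, Pr s *
        (∑ ω : Ω0 × (∀ j, Ωp j),
          π ω * U i (fun j => (Function.update s i r) j (ω.2 j)) ω) :=
  fun i ↦ statement2_general hgen π (U i) i
end

section
/- Let Pr be a pmf on S and let P be the conditional pmf generated by Pr. Then Pr satisfies the virtual CCE constraints if and only if P is a CCE for the stochastic game. -/
open Finset

/-!
Fix a player, and let `D v β` be its expected payoff, restricted to the event that its signal is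
`v`, from playing `β` there. The cheapest thresholds `θ v` compatible with condition (ii) of a CCE
are the maxima `max_β D v β` divided by the mass of that event, so a CCE is a law under which the
player earns at least `∑ v, max_β D v β`. Since a pure strategy `r` chooses its action separately
for each signal, this sum is the maximum of `∑ v, D v (r v)` over `r`, which is the payoff of the
best fixed deviation in the virtual game.
-/

section Threshold

variable {V B : Type*} [Fintype V] [Finite B] [Nonempty B]

theorem exists_threshold_iff_forall_sum_le {q : V → ℝ} {D : V → B → ℝ} {u c : ℝ}
    (hq : ∀ v, 0 ≤ q v) (hu : 0 ≤ u) (hD : ∀ v β, 0 ≤ D v β) (hDq : ∀ v β, D v β ≤ q v * u) :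
    (∃ θ : V → ℝ, (∀ v, θ v ∈ Set.Icc 0 u) ∧ ∑ v, q v * θ v ≤ c ∧ ∀ v β, D v β ≤ q v * θ v) ↔
      ∀ r : V → B, ∑ v, D v (r v) ≤ c := by
  constructor
  · rintro ⟨θ, -, hc, hdev⟩ r
    exact (sum_le_sum fun v _ => hdev v (r v)).trans hc
  · intro h
    choose best hbest using fun v => Finite.exists_max (D v)
    -- Where `q v = 0` the quotient is the junk value `0`, but then the bound forces `D v = 0`.
    have mul_threshold : ∀ v, q v * (D v (best v) / q v) = D v (best v) := fun v =>
      mul_div_cancel_of_imp' fun hv =>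
        le_antisymm (by simpa only [hv, zero_mul] using hDq v (best v)) (hD v (best v))
    refine ⟨fun v => D v (best v) / q v, fun v => ⟨div_nonneg (hD v _) (hq v), ?_⟩, ?_, ?_⟩
    · exact div_le_of_le_mul₀ (hq v) hu (mul_comm (q v) u ▸ hDq v (best v))
    · simpa only [mul_threshold] using h best
    · simpa only [mul_threshold] using hbest

end Threshold

section Expectation

variable {Ω B : Type*} [Fintype B] {π : Ω → ℝ} {P : Ω → B → ℝ}

/-- The expectation of `g` on the event `E`, not divided by the mass of `E`, when the state `ω` has
weight `π ω` and the outcome `α` has conditional weight `P ω α`. -/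
def restrictedExpectation (π : Ω → ℝ) (P : Ω → B → ℝ) (E : Finset Ω) (g : B → Ω → ℝ) : ℝ :=
  ∑ ω ∈ E, ∑ α, π ω * P ω α * g α ω

theorem restrictedExpectation_const (E : Finset Ω) (c : ℝ) :
    restrictedExpectation π P E (fun _ _ => c) =
      restrictedExpectation π P E (fun _ _ => 1) * c := by
  simp only [restrictedExpectation, sum_mul, mul_one]

theorem restrictedExpectation_nonneg (hπ : ∀ ω, 0 ≤ π ω) (hP : ∀ ω α, 0 ≤ P ω α) (E : Finset Ω)
    {g : B → Ω → ℝ} (hg : ∀ α ω, 0 ≤ g α ω) : 0 ≤ restrictedExpectation π P E g :=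
  sum_nonneg fun ω _ => sum_nonneg fun α _ => mul_nonneg (mul_nonneg (hπ ω) (hP ω α)) (hg α ω)

theorem restrictedExpectation_mono (hπ : ∀ ω, 0 ≤ π ω) (hP : ∀ ω α, 0 ≤ P ω α) (E : Finset Ω)
    {f g : B → Ω → ℝ} (hfg : ∀ α ω, f α ω ≤ g α ω) :
    restrictedExpectation π P E f ≤ restrictedExpectation π P E g :=
  sum_le_sum fun ω _ => sum_le_sum fun α _ =>
    mul_le_mul_of_nonneg_left (hfg α ω) (mul_nonneg (hπ ω) (hP ω α))

theorem sum_restrictedExpectation_fiber {V : Type*} [Fintype Ω] [Fintype V] [DecidableEq V]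
    (o : Ω → V) (g : V → B → Ω → ℝ) :
    ∑ v, restrictedExpectation π P {ω | o ω = v} (g v) =
      restrictedExpectation π P univ fun α ω => g (o ω) α ω := by
  unfold restrictedExpectation
  rw [← sum_fiberwise univ o]
  refine sum_congr rfl fun v _ => sum_congr rfl fun ω hω => ?_
  obtain rfl := (mem_filter.mp hω).2
  rfl

-- `d β α ω` is the payoff of playing `β` in state `ω` where the outcome would have been `α`.
theorem exists_threshold_iff_forall_restrictedExpectation_le {V A : Type*} [Fintype Ω] [Finite V]
    [DecidableEq V] [Finite A] [Nonempty A] (hπ : ∀ ω, 0 ≤ π ω) (hP : ∀ ω α, 0 ≤ P ω α)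
    (o : Ω → V) {d : A → B → Ω → ℝ} {u c : ℝ} (hu : 0 ≤ u) (hd : ∀ β α ω, d β α ω ∈ Set.Icc 0 u) :
    (∃ θ : V → ℝ, (∀ v, θ v ∈ Set.Icc 0 u) ∧
        restrictedExpectation π P univ (fun _ ω => θ (o ω)) ≤ c ∧
        ∀ v β, restrictedExpectation π P {ω | o ω = v} (d β) ≤
          restrictedExpectation π P {ω | o ω = v} fun _ _ => θ v) ↔
      ∀ r : V → A, restrictedExpectation π P univ (fun α ω => d (r (o ω)) α ω) ≤ c := by
  have := Fintype.ofFinite V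
  let mass v := restrictedExpectation π P {ω | o ω = v} fun _ _ => 1
  let dev v β := restrictedExpectation π P {ω | o ω = v} (d β)
  have mass_nonneg (v : V) : 0 ≤ mass v :=
    restrictedExpectation_nonneg hπ hP _ fun _ _ => zero_le_one
  have expectation_const (v : V) (t : ℝ) :
      restrictedExpectation π P {ω | o ω = v} (fun _ _ => t) = mass v * t :=
    restrictedExpectation_const _ t
  have expectation_threshold (t : V → ℝ) :
      restrictedExpectation π P univ (fun _ ω => t (o ω)) = ∑ v, mass v * t v := by
    simp only [← sum_restrictedExpectation_fiber o fun v _ _ => t v, expectation_const]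
  have expectation_strategy (r : V → A) :
      restrictedExpectation π P univ (fun α ω => d (r (o ω)) α ω) = ∑ v, dev v (r v) :=
    (sum_restrictedExpectation_fiber o fun v => d (r v)).symm
  have dev_nonneg (v : V) (β : A) : 0 ≤ dev v β :=
    restrictedExpectation_nonneg hπ hP _ fun α ω => (hd β α ω).1
  have dev_le (v : V) (β : A) : dev v β ≤ mass v * u :=
    (restrictedExpectation_mono hπ hP _ fun α ω => (hd β α ω).2).trans_eq (expectation_const v u)
  simp only [expectation_threshold, expectation_const, expectation_strategy]
  exact exists_threshold_iff_forall_sum_le mass_nonneg hu dev_nonneg dev_le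

end Expectation

section Game

variable {ι Ω : Type*} {V A : ι → Type*}

section CCE

variable [Fintype ι] [DecidableEq ι] [∀ i, DecidableEq (V i)] [∀ i, Fintype (A i)] [Fintype Ω]

/-- `P` is a CCE for the stochastic game in which the state `ω` has weight `π ω` and player `i`
observes the signal `o i ω`. The threshold `θ i v` is what player `i` is promised on signal `v`; it
must be worth at least as much there as any fixed action, and be paid for on average by the utility
of player `i`. -/
def IsCCE (o : ∀ i, Ω → V i) (π : Ω → ℝ) (U : ι → (∀ i, A i) → Ω → ℝ) (umax : ι → ℝ)
    (P : Ω → (∀ i, A i) → ℝ) : Prop :=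
  ∃ θ : ∀ i, V i → ℝ,
    (∀ i v, θ i v ∈ Set.Icc 0 (umax i)) ∧
    (∀ i, restrictedExpectation π P univ (fun _ ω => θ i (o i ω)) ≤
      restrictedExpectation π P univ (U i)) ∧
    ∀ i v (β : A i),
      restrictedExpectation π P {ω | o i ω = v} (fun α ω => U i (Function.update α i β) ω) ≤
        restrictedExpectation π P {ω | o i ω = v} fun _ _ => θ i v

theorem isCCE_iff_forall_strategy [∀ i, Finite (V i)] [∀ i, Nonempty (A i)] (o : ∀ i, Ω → V i)
    {π : Ω → ℝ} (hπ : ∀ ω, 0 ≤ π ω) {U : ι → (∀ i, A i) → Ω → ℝ} {umax : ι → ℝ}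
    (humax : ∀ i, 0 ≤ umax i) (hU : ∀ i α ω, U i α ω ∈ Set.Icc 0 (umax i))
    {P : Ω → (∀ i, A i) → ℝ} (hP : ∀ ω α, 0 ≤ P ω α) :
    IsCCE o π U umax P ↔ ∀ i (r : V i → A i),
      restrictedExpectation π P univ (fun α ω => U i (Function.update α i (r (o i ω))) ω) ≤
        restrictedExpectation π P univ (U i) := by
  refine Iff.trans ?_ (forall_congr' fun i =>
    exists_threshold_iff_forall_restrictedExpectation_le hπ hP (o i) (humax i)
      fun β α ω => hU i (Function.update α i β) ω)
  simp only [IsCCE, Classical.skolem, forall_and]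

end CCE

/-- The action profile `b^{(s)}(ω)` played in state `ω` when each player `i` applies the pure
strategy `s i` to its signal `o i ω`. -/
def playedProfile (o : ∀ i, Ω → V i) (s : ∀ i, V i → A i) (ω : Ω) : ∀ i, A i :=
  fun i => s i (o i ω)

theorem playedProfile_update [DecidableEq ι] (o : ∀ i, Ω → V i) (s : ∀ i, V i → A i) (i : ι)
    (r : V i → A i) (ω : Ω) :
    playedProfile o (Function.update s i r) ω =
      Function.update (playedProfile o s ω) i (r (o i ω)) :=
  funext fun j => Function.apply_update (fun k (t : V k → A k) => t (o k ω)) s i r j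

/-- The payoff `h(s)` of the pure strategy profile `s` in the virtual static game, for a player with
utility `u`. -/
def virtualPayoff [Fintype Ω] (o : ∀ i, Ω → V i) (π : Ω → ℝ) (u : (∀ i, A i) → Ω → ℝ)
    (s : ∀ i, V i → A i) : ℝ :=
  ∑ ω, π ω * u (playedProfile o s ω) ω

variable [Fintype ι] [DecidableEq ι] [∀ i, Fintype (V i)] [∀ i, DecidableEq (V i)]
  [∀ i, Fintype (A i)]

/-- The virtual CCE constraints on weights `Pr` over pure strategy profiles: no player gains by
replacing its strategy by a fixed one. -/
def SatisfiesVirtualCCE [Fintype Ω] (o : ∀ i, Ω → V i) (π : Ω → ℝ)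
    (U : ι → (∀ i, A i) → Ω → ℝ) (Pr : (∀ i, V i → A i) → ℝ) : Prop :=
  ∀ i (r : V i → A i),
    ∑ s, Pr s * virtualPayoff o π (U i) (Function.update s i r) ≤
      ∑ s, Pr s * virtualPayoff o π (U i) s

section GeneratedLaw

variable [∀ i, DecidableEq (A i)]

/-- The conditional law of the action profile generated by drawing a pure strategy profile with
weights `Pr`. -/
def generatedLaw (o : ∀ i, Ω → V i) (Pr : (∀ i, V i → A i) → ℝ) (ω : Ω) (α : ∀ i, A i) : ℝ :=
  ∑ s, Pr s * if playedProfile o s ω = α then 1 else 0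

theorem generatedLaw_nonneg (o : ∀ i, Ω → V i) {Pr : (∀ i, V i → A i) → ℝ}
    (hPr : ∀ s, 0 ≤ Pr s) (ω : Ω) (α : ∀ i, A i) : 0 ≤ generatedLaw o Pr ω α :=
  sum_nonneg fun s _ => mul_nonneg (hPr s) (ite_nonneg zero_le_one le_rfl)

theorem sum_generatedLaw_mul (o : ∀ i, Ω → V i) (Pr : (∀ i, V i → A i) → ℝ) (ω : Ω)
    (f : (∀ i, A i) → ℝ) :
    ∑ α, generatedLaw o Pr ω α * f α = ∑ s, Pr s * f (playedProfile o s ω) := by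
  simp only [generatedLaw, sum_mul]
  rw [sum_comm]
  simp only [mul_assoc, ite_mul, one_mul, zero_mul, ← mul_sum, sum_ite_eq, mem_univ, if_true]

theorem restrictedExpectation_generatedLaw [Fintype Ω] (o : ∀ i, Ω → V i) (π : Ω → ℝ)
    (Pr : (∀ i, V i → A i) → ℝ) (u : (∀ i, A i) → Ω → ℝ) :
    restrictedExpectation π (generatedLaw o Pr) univ u = ∑ s, Pr s * virtualPayoff o π u s := by
  simp only [restrictedExpectation, virtualPayoff, mul_assoc, ← mul_sum,
    sum_generatedLaw_mul o Pr _ (u · _)]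
  simp only [mul_sum, mul_left_comm (Pr _)]
  exact sum_comm

theorem satisfiesVirtualCCE_iff_forall_strategy [Fintype Ω] (o : ∀ i, Ω → V i) (π : Ω → ℝ)
    (U : ι → (∀ i, A i) → Ω → ℝ) (Pr : (∀ i, V i → A i) → ℝ) :
    SatisfiesVirtualCCE o π U Pr ↔ ∀ i (r : V i → A i),
      restrictedExpectation π (generatedLaw o Pr) univ
          (fun α ω => U i (Function.update α i (r (o i ω))) ω) ≤
        restrictedExpectation π (generatedLaw o Pr) univ (U i) := by
  simp only [SatisfiesVirtualCCE, restrictedExpectation_generatedLaw, virtualPayoff,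
    playedProfile_update]

theorem statement3_general [Fintype Ω] [∀ i, Nonempty (A i)] (o : ∀ i, Ω → V i) {π : Ω → ℝ}
    (hπ : ∀ ω, 0 ≤ π ω) {U : ι → (∀ i, A i) → Ω → ℝ} {umax : ι → ℝ} (humax : ∀ i, 0 ≤ umax i)
    (hU : ∀ i α ω, U i α ω ∈ Set.Icc 0 (umax i)) {Pr : (∀ i, V i → A i) → ℝ}
    (hPr : ∀ s, 0 ≤ Pr s) :
    SatisfiesVirtualCCE o π U Pr ↔ IsCCE o π U umax (generatedLaw o Pr) := by
  rw [satisfiesVirtualCCE_iff_forall_strategy,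
    isCCE_iff_forall_strategy o hπ humax hU (generatedLaw_nonneg o hPr)]

end GeneratedLaw

end Game

/-- `Pr` satisfies the virtual CCE constraints iff the generated conditional
pmf `P` is a CCE for the stochastic game. -/
theorem statement3
    (N : ℕ) (hN : 1 ≤ N)
    (Ω0 : Type) (Ωp : Fin N → Type) (A : Fin N → Type)
    [Fintype Ω0] [Nonempty Ω0]
    [∀ i, Fintype (Ωp i)] [∀ i, Nonempty (Ωp i)] [∀ i, DecidableEq (Ωp i)]
    [∀ i, Fintype (A i)] [∀ i, Nonempty (A i)] [∀ i, DecidableEq (A i)]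
    (π : Ω0 × (∀ j, Ωp j) → ℝ)
    (hπ0 : ∀ ω, 0 ≤ π ω) (hπ1 : ∑ ω : Ω0 × (∀ j, Ωp j), π ω = 1)
    (U : ∀ _ : Fin N, (∀ j, A j) → Ω0 × (∀ j, Ωp j) → ℝ)
    (umax : Fin N → ℝ) (humax : ∀ i, 0 ≤ umax i)
    (hU : ∀ i α ω, U i α ω ∈ Set.Icc 0 (umax i))
    (Pr : (∀ j, Ωp j → A j) → ℝ)
    (hPr0 : ∀ s, 0 ≤ Pr s) (hPr1 : ∑ s : ∀ j, Ωp j → A j, Pr s = 1)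
    (P : Ω0 × (∀ j, Ωp j) → (∀ j, A j) → ℝ)
    (hgen : ∀ ω α, P ω α =
      ∑ s : ∀ j, Ωp j → A j, Pr s * (if (fun j => s j (ω.2 j)) = α then 1 else 0)) :
    -- virtual CCE constraints for `Pr`
    (∀ (i : Fin N) (r : Ωp i → A i),
      ∑ s : ∀ j, Ωp j → A j, Pr s *
        (∑ ω : Ω0 × (∀ j, Ωp j), π ω * U i (fun j => s j (ω.2 j)) ω) ≥
      ∑ s : ∀ j, Ωp j → A j, Pr s *
        (∑ ω : Ω0 × (∀ j, Ωp j),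
          π ω * U i (fun j => (Function.update s i r) j (ω.2 j)) ω))
    ↔
    -- `P` is a CCE for the stochastic game
    (∃ θ : ∀ i : Fin N, Ωp i → ℝ,
      (∀ i v, θ i v ∈ Set.Icc 0 (umax i)) ∧
      (∀ i : Fin N,
        ∑ ω : Ω0 × (∀ j, Ωp j), ∑ α : ∀ j, A j, π ω * P ω α * U i α ω ≥
        ∑ ω : Ω0 × (∀ j, Ωp j), ∑ α : ∀ j, A j, π ω * P ω α * θ i (ω.2 i)) ∧
      (∀ (i : Fin N) (v : Ωp i) (β : A i),
        ∑ ω ∈ Finset.univ.filter (fun ω : Ω0 × (∀ j, Ωp j) => ω.2 i = v),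
          ∑ α : ∀ j, A j, π ω * P ω α * θ i v ≥
        ∑ ω ∈ Finset.univ.filter (fun ω : Ω0 × (∀ j, Ωp j) => ω.2 i = v),
          ∑ α : ∀ j, A j, π ω * P ω α * U i (Function.update α i β) ω)) := by
  obtain rfl : P = generatedLaw (fun i ω => ω.2 i) Pr := funext₂ hgen
  exact (statement3_general (fun i ω => ω.2 i) hπ0 humax hU hPr0 :)
end

section
/- Let Pr be a pmf on S that is a NE for the virtual static game, and let P be the conditional pmf generated by Pr. Then P is a NE for the stochastic game. -/
open Finset

/-!
In the stochastic game, `θ i v` can be taken to be the best conditional payoff that player `i` can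
secure against `P` by a single action on observing `v`. Choosing such a best action for every `v`
gives a pure strategy `r` of player `i`, and the averaged `θ i` is then exactly the payoff of
deviating to `r`. Thus `P` is a CCE as soon as no deviation to a pure strategy is profitable, which
for a generated `P` is the virtual CCE constraint. Product form is inherited because each player's
action is a function of that player's own pure strategy and observation.
-/

section Simplex

variable {S : Type*} [CommSemiring S] [PartialOrder S] [IsOrderedRing S]

theorem stdSimplex_map_apply {X Y : Type*} [Fintype X] [Fintype Y] [DecidableEq Y]
    (f : X → Y) (p : stdSimplex S X) (y : Y) :
    stdSimplex.map f p y = ∑ x with f x = y, p x :=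
  FunOnFinite.linearMap_apply_apply S S f p y

theorem sum_stdSimplex_map_mul {X Y : Type*} [Fintype X] [Fintype Y]
    (f : X → Y) (p : stdSimplex S X) (F : Y → S) :
    ∑ y, stdSimplex.map f p y * F y = ∑ x, p x * F (f x) := by
  classical
  rw [← sum_fiberwise univ f]
  refine sum_congr rfl fun y _ => ?_
  rw [stdSimplex_map_apply, sum_mul]
  exact sum_congr rfl fun x hx => by rw [(mem_filter.mp hx).2]

theorem stdSimplex_map_piMap_apply_of_eq_prod {ι : Type*} [Fintype ι] [DecidableEq ι]
    {X Y : ι → Type*} [∀ i, Fintype (X i)] [∀ i, Fintype (Y i)] (f : ∀ i, X i → Y i)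
    {p : stdSimplex S (∀ i, X i)} {q : ∀ i, stdSimplex S (X i)}
    (hp : ∀ x, p x = ∏ i, q i (x i)) (y : ∀ i, Y i) :
    stdSimplex.map (Pi.map f) p y = ∏ i, stdSimplex.map (f i) (q i) (y i) := by
  classical
  simp only [stdSimplex_map_apply, prod_univ_sum, hp]
  refine sum_congr ?_ fun _ _ => rfl
  ext x
  simp [funext_iff]

end Simplex

/-- The data of a one-shot stochastic game with players `ι` and random event in `Ω`. Player `i`
sees only `signal i ω : V i`, and has actions `A i`. A game whose event is a tuple
`(ω₀, ω₁, …, ω_N)` with `ω_i` revealed to player `i` is the case where the signals are coordinate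
projections. -/
structure StochasticGame (ι Ω : Type*) [Fintype Ω] (V A : ι → Type*) where
  prior : stdSimplex ℝ Ω
  signal : ∀ i, Ω → V i
  utility : ι → (∀ j, A j) → Ω → ℝ
  maxUtility : ι → ℝ
  maxUtility_nonneg : ∀ i, 0 ≤ maxUtility i
  utility_mem_Icc : ∀ i α ω, utility i α ω ∈ Set.Icc 0 (maxUtility i)

namespace StochasticGame

variable {ι Ω : Type*} [Fintype Ω] {V A : ι → Type*} (G : StochasticGame ι Ω V A)

section PureStrategies

/-- The action profile `b^{(s)}(ω)` played at `ω` under the pure strategy profile `s`. -/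
def play (s : ∀ j, V j → A j) (ω : Ω) : ∀ j, A j :=
  fun j => s j (G.signal j ω)

theorem play_update [DecidableEq ι] (s : ∀ j, V j → A j) (i : ι) (r : V i → A i) (ω : Ω) :
    G.play (Function.update s i r) ω = Function.update (G.play s ω) i (r (G.signal i ω)) :=
  funext fun j =>
    Function.apply_update (fun k (t : V k → A k) => t (G.signal k ω)) s i r j

/-- The utility `h_i(s)` of player `i` in the virtual static game, whose actions are the pure
strategies of the stochastic game. -/
def virtualUtility (i : ι) (s : ∀ j, V j → A j) : ℝ :=
  ∑ ω, G.prior ω * G.utility i (G.play s ω) ω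

end PureStrategies

section SignalEvent

variable (i : ι) [DecidableEq (V i)]

/-- The event that player `i` observes `v`. -/
def signalEvent (v : V i) : Finset Ω :=
  {ω | G.signal i ω = v}

variable {i}

theorem signal_of_mem_signalEvent {v : V i} {ω : Ω} (h : ω ∈ G.signalEvent i v) :
    G.signal i ω = v :=
  (mem_filter.mp h).2

end SignalEvent

variable [Fintype ι] [DecidableEq ι] [∀ i, Fintype (A i)]

section Expectation

/-- The expectation of `f α ω` restricted to `ω ∈ E`, when `ω` is drawn from the prior and the
action profile `α` from `P ω`. It is not divided by the probability of `E`. -/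
def expectation (E : Finset Ω) (P : Ω → stdSimplex ℝ (∀ j, A j)) (f : (∀ j, A j) → Ω → ℝ) : ℝ :=
  ∑ ω ∈ E, ∑ α, G.prior ω * P ω α * f α ω

variable {E : Finset Ω} {P : Ω → stdSimplex ℝ (∀ j, A j)}

theorem expectation_const (c : ℝ) :
    G.expectation E P (fun _ _ => c) = (∑ ω ∈ E, G.prior ω) * c := by
  simp only [expectation, ← sum_mul, ← mul_sum, stdSimplex.sum_eq_one, mul_one]

theorem expectation_congr {f f' : (∀ j, A j) → Ω → ℝ} (h : ∀ α, ∀ ω ∈ E, f α ω = f' α ω) :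
    G.expectation E P f = G.expectation E P f' :=
  sum_congr rfl fun ω hω => sum_congr rfl fun α _ => by rw [h α ω hω]

theorem expectation_mono {f f' : (∀ j, A j) → Ω → ℝ} (h : ∀ α, ∀ ω ∈ E, f α ω ≤ f' α ω) :
    G.expectation E P f ≤ G.expectation E P f' :=
  sum_le_sum fun ω hω => sum_le_sum fun α _ => mul_le_mul_of_nonneg_left (h α ω hω)
    (mul_nonneg (stdSimplex.zero_le _ _) (stdSimplex.zero_le _ _))

theorem exists_mem_Icc_expectation_const_eq {f : (∀ j, A j) → Ω → ℝ} {a b : ℝ} (hab : a ≤ b)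
    (hf : ∀ α, ∀ ω ∈ E, f α ω ∈ Set.Icc a b) :
    ∃ c ∈ Set.Icc a b, G.expectation E P (fun _ _ => c) = G.expectation E P f := by
  have hE : 0 ≤ ∑ ω ∈ E, G.prior ω := sum_nonneg fun ω _ => stdSimplex.zero_le _ ω
  have hmem : G.expectation E P f ∈
      Set.Icc ((∑ ω ∈ E, G.prior ω) * a) ((∑ ω ∈ E, G.prior ω) * b) := by
    rw [← G.expectation_const (P := P) a, ← G.expectation_const (P := P) b]
    exact ⟨G.expectation_mono fun α ω hω => (hf α ω hω).1,
      G.expectation_mono fun α ω hω => (hf α ω hω).2⟩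
  rw [← Set.image_mul_left_Icc hE hab] at hmem
  simpa only [expectation_const, Set.mem_image] using hmem

theorem sum_expectation_signalEvent (i : ι) [DecidableEq (V i)] (f : (∀ j, A j) → Ω → ℝ) :
    ∑ v ∈ univ.image (G.signal i), G.expectation (G.signalEvent i v) P f =
      G.expectation univ P f :=
  sum_fiberwise_of_maps_to (fun ω _ => mem_image_of_mem (G.signal i) (mem_univ ω)) _

theorem exists_guarantee_eq_bestResponse (P : Ω → stdSimplex ℝ (∀ j, A j)) (i : ι)
    [DecidableEq (V i)] [Nonempty (A i)] (v : V i) :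
    ∃ θ ∈ Set.Icc 0 (G.maxUtility i), ∃ b : A i,
      G.expectation (G.signalEvent i v) P (fun _ _ => θ) =
        G.expectation (G.signalEvent i v) P
          (fun α ω => G.utility i (Function.update α i b) ω) ∧
      ∀ β, G.expectation (G.signalEvent i v) P
          (fun α ω => G.utility i (Function.update α i β) ω) ≤
        G.expectation (G.signalEvent i v) P (fun _ _ => θ) := by
  obtain ⟨b, hb⟩ := Finite.exists_max fun β => G.expectation (G.signalEvent i v) P
    (fun α ω => G.utility i (Function.update α i β) ω)
  obtain ⟨θ, hθ, hθb⟩ := G.exists_mem_Icc_expectation_const_eq (P := P) (G.maxUtility_nonneg i)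
    fun α ω (_ : ω ∈ G.signalEvent i v) => G.utility_mem_Icc i (Function.update α i b) ω
  exact ⟨θ, hθ, b, hθb, fun β => (hb β).trans hθb.ge⟩

end Expectation

variable [∀ i, DecidableEq (V i)]

section CCE

/-- The conditional pmf `P` is a coarse correlated equilibrium (CCE) of the stochastic game: on
observing `v`, player `i` has a guarantee `θ i v` that no fixed action beats on that event, and
following `P` yields at least the average guarantee. -/
def IsCCE (P : Ω → stdSimplex ℝ (∀ j, A j)) : Prop :=
  ∃ θ : ∀ i, V i → ℝ,
    (∀ i v, θ i v ∈ Set.Icc 0 (G.maxUtility i)) ∧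
    (∀ i, G.expectation univ P (fun _ ω => θ i (G.signal i ω)) ≤
      G.expectation univ P (G.utility i)) ∧
    ∀ i v β, G.expectation (G.signalEvent i v) P
        (fun α ω => G.utility i (Function.update α i β) ω) ≤
      G.expectation (G.signalEvent i v) P (fun _ _ => θ i v)

theorem isCCE_of_forall_deviation_le [∀ i, Nonempty (A i)]
    {P : Ω → stdSimplex ℝ (∀ j, A j)}
    (h : ∀ i (r : V i → A i),
      G.expectation univ P
          (fun α ω => G.utility i (Function.update α i (r (G.signal i ω))) ω) ≤
        G.expectation univ P (G.utility i)) :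
    G.IsCCE P := by
  choose θ hθ r hθr hbest using fun i => G.exists_guarantee_eq_bestResponse P i
  refine ⟨θ, hθ, fun i => le_of_eq_of_le ?_ (h i (r i)), hbest⟩
  rw [← G.sum_expectation_signalEvent i, ← G.sum_expectation_signalEvent i]
  refine sum_congr rfl fun v _ => ?_
  calc G.expectation (G.signalEvent i v) P (fun _ ω => θ i (G.signal i ω))
      = G.expectation (G.signalEvent i v) P (fun _ _ => θ i v) :=
        G.expectation_congr fun _ ω hω => by rw [G.signal_of_mem_signalEvent hω]
    _ = G.expectation (G.signalEvent i v) P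
          (fun α ω => G.utility i (Function.update α i (r i v)) ω) := hθr i v
    _ = G.expectation (G.signalEvent i v) P
          (fun α ω => G.utility i (Function.update α i (r i (G.signal i ω))) ω) :=
        G.expectation_congr fun _ ω hω => by rw [G.signal_of_mem_signalEvent hω]

end CCE

section VirtualGame

variable [∀ i, Fintype (V i)]

/-- The conditional pmf on action profiles generated by a pmf on pure strategy profiles. -/
noncomputable def generated (Pr : stdSimplex ℝ (∀ j, V j → A j)) (ω : Ω) :
    stdSimplex ℝ (∀ j, A j) :=
  stdSimplex.map (fun s => G.play s ω) Pr

theorem generated_apply [∀ i, DecidableEq (A i)] (Pr : stdSimplex ℝ (∀ j, V j → A j)) (ω : Ω)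
    (α : ∀ j, A j) :
    G.generated Pr ω α = ∑ s, Pr s * if G.play s ω = α then 1 else 0 := by
  simp only [generated, stdSimplex_map_apply, sum_filter, mul_ite, mul_one, mul_zero]

theorem expectation_generated (Pr : stdSimplex ℝ (∀ j, V j → A j)) (E : Finset Ω)
    (f : (∀ j, A j) → Ω → ℝ) :
    G.expectation E (G.generated Pr) f = ∑ s, Pr s * ∑ ω ∈ E, G.prior ω * f (G.play s ω) ω := by
  calc G.expectation E (G.generated Pr) f
      = ∑ ω ∈ E, ∑ s, G.prior ω * (Pr s * f (G.play s ω) ω) := by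
        simp only [expectation, mul_assoc, ← mul_sum, generated, sum_stdSimplex_map_mul]
    _ = ∑ s, Pr s * ∑ ω ∈ E, G.prior ω * f (G.play s ω) ω := by
        rw [sum_comm]
        simp only [mul_sum, mul_left_comm]

/-- The virtual CCE constraints: under `Pr`, no player gains in the virtual static game by
committing to a fixed pure strategy. -/
def IsVirtualCCE (Pr : stdSimplex ℝ (∀ j, V j → A j)) : Prop :=
  ∀ (i : ι) (r : V i → A i),
    ∑ s, Pr s * G.virtualUtility i (Function.update s i r) ≤ ∑ s, Pr s * G.virtualUtility i s

variable {G} {Pr : stdSimplex ℝ (∀ j, V j → A j)}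

theorem IsVirtualCCE.isCCE_generated [∀ i, Nonempty (A i)] (h : G.IsVirtualCCE Pr) :
    G.IsCCE (G.generated Pr) := by
  refine G.isCCE_of_forall_deviation_le fun i r => ?_
  simpa only [expectation_generated, virtualUtility, play_update] using h i r

end VirtualGame

section Nash

/-- The conditional pmf `P` has product form: given `ω`, the players' actions are independent, and
that of player `i` depends on `ω` only through the signal of `i`. -/
def HasProductForm (P : Ω → stdSimplex ℝ (∀ j, A j)) : Prop :=
  ∃ Pc : ∀ i, V i → stdSimplex ℝ (A i), ∀ ω α, P ω α = ∏ i, Pc i (G.signal i ω) (α i)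

/-- `P` is a Nash equilibrium (NE) of the stochastic game. -/
def IsNash (P : Ω → stdSimplex ℝ (∀ j, A j)) : Prop :=
  G.HasProductForm P ∧ G.IsCCE P

variable [∀ i, Fintype (V i)]

/-- `Pr` is a Nash equilibrium of the virtual static game: the players mix independently over their
pure strategies, and the virtual CCE constraints hold. -/
def IsVirtualNash (Pr : stdSimplex ℝ (∀ j, V j → A j)) : Prop :=
  (∃ g : ∀ i, stdSimplex ℝ (V i → A i), ∀ s, Pr s = ∏ i, g i (s i)) ∧ G.IsVirtualCCE Pr

theorem hasProductForm_generated {Pr : stdSimplex ℝ (∀ j, V j → A j)}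
    {g : ∀ i, stdSimplex ℝ (V i → A i)} (hPr : ∀ s, Pr s = ∏ i, g i (s i)) :
    G.HasProductForm (G.generated Pr) := by
  refine ⟨fun i v => stdSimplex.map (fun t : V i → A i => t v) (g i), fun ω α => ?_⟩
  exact stdSimplex_map_piMap_apply_of_eq_prod (fun i (t : V i → A i) => t (G.signal i ω)) hPr α

end Nash

end StochasticGame

theorem statement5_general {ι Ω : Type*} [Fintype ι] [DecidableEq ι] [Fintype Ω]
    {V A : ι → Type*} [∀ i, Fintype (V i)] [∀ i, DecidableEq (V i)]
    [∀ i, Fintype (A i)] [∀ i, Nonempty (A i)] (G : StochasticGame ι Ω V A)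
    {Pr : stdSimplex ℝ (∀ j, V j → A j)} (hPr : G.IsVirtualNash Pr) :
    G.IsNash (G.generated Pr) := by
  obtain ⟨⟨g, hg⟩, hCCE⟩ := hPr
  exact ⟨G.hasProductForm_generated hg, hCCE.isCCE_generated⟩

/-- If `Pr` is a NE for the virtual static game (product form over pmfs
`g i` on pure strategies, plus the virtual CCE constraints), then the generated
conditional pmf `P` is a NE for the stochastic game (product form plus the stochastic
CCE constraints). -/
theorem statement5
    (N : ℕ) (hN : 1 ≤ N)
    (Ω0 : Type) (Ωp : Fin N → Type) (A : Fin N → Type)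
    [Fintype Ω0] [Nonempty Ω0]
    [∀ i, Fintype (Ωp i)] [∀ i, Nonempty (Ωp i)] [∀ i, DecidableEq (Ωp i)]
    [∀ i, Fintype (A i)] [∀ i, Nonempty (A i)] [∀ i, DecidableEq (A i)]
    (π : Ω0 × (∀ j, Ωp j) → ℝ)
    (hπ0 : ∀ ω, 0 ≤ π ω) (hπ1 : ∑ ω : Ω0 × (∀ j, Ωp j), π ω = 1)
    (U : ∀ _ : Fin N, (∀ j, A j) → Ω0 × (∀ j, Ωp j) → ℝ)
    (umax : Fin N → ℝ) (humax : ∀ i, 0 ≤ umax i)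
    (hU : ∀ i α ω, U i α ω ∈ Set.Icc 0 (umax i))
    (Pr : (∀ j, Ωp j → A j) → ℝ)
    (hPr0 : ∀ s, 0 ≤ Pr s) (hPr1 : ∑ s : ∀ j, Ωp j → A j, Pr s = 1)
    -- product form of `Pr`
    (g : ∀ i : Fin N, (Ωp i → A i) → ℝ)
    (hg0 : ∀ i s, 0 ≤ g i s)
    (hg1 : ∀ i, ∑ s : Ωp i → A i, g i s = 1)
    (hPrform : ∀ s, Pr s = ∏ i, g i (s i))
    -- virtual CCE constraints for `Pr`
    (hvirt : ∀ (i : Fin N) (r : Ωp i → A i),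
      ∑ s : ∀ j, Ωp j → A j, Pr s *
        (∑ ω : Ω0 × (∀ j, Ωp j), π ω * U i (fun j => s j (ω.2 j)) ω) ≥
      ∑ s : ∀ j, Ωp j → A j, Pr s *
        (∑ ω : Ω0 × (∀ j, Ωp j),
          π ω * U i (fun j => (Function.update s i r) j (ω.2 j)) ω))
    (P : Ω0 × (∀ j, Ωp j) → (∀ j, A j) → ℝ)
    (hgen : ∀ ω α, P ω α =
      ∑ s : ∀ j, Ωp j → A j, Pr s * (if (fun j => s j (ω.2 j)) = α then 1 else 0)) :
    -- `P` is a NE for the stochastic game: product form ...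
    (∃ Pc : ∀ i : Fin N, Ωp i → A i → ℝ,
      (∀ i v a, 0 ≤ Pc i v a) ∧ (∀ i v, ∑ a : A i, Pc i v a = 1) ∧
      (∀ (ω : Ω0 × (∀ j, Ωp j)) (α : ∀ j, A j), P ω α = ∏ i, Pc i (ω.2 i) (α i)))
    ∧
    -- ... together with the stochastic CCE constraints
    (∃ θ : ∀ i : Fin N, Ωp i → ℝ,
      (∀ i v, θ i v ∈ Set.Icc 0 (umax i)) ∧
      (∀ i : Fin N,
        ∑ ω : Ω0 × (∀ j, Ωp j), ∑ α : ∀ j, A j, π ω * P ω α * U i α ω ≥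
        ∑ ω : Ω0 × (∀ j, Ωp j), ∑ α : ∀ j, A j, π ω * P ω α * θ i (ω.2 i)) ∧
      (∀ (i : Fin N) (v : Ωp i) (β : A i),
        ∑ ω ∈ Finset.univ.filter (fun ω : Ω0 × (∀ j, Ωp j) => ω.2 i = v),
          ∑ α : ∀ j, A j, π ω * P ω α * θ i v ≥
        ∑ ω ∈ Finset.univ.filter (fun ω : Ω0 × (∀ j, Ωp j) => ω.2 i = v),
          ∑ α : ∀ j, A j, π ω * P ω α * U i (Function.update α i β) ω)) := by
  let G : StochasticGame (Fin N) (Ω0 × (∀ j, Ωp j)) Ωp A :=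
    { prior := ⟨π, hπ0, hπ1⟩
      signal := fun i ω => ω.2 i
      utility := U
      maxUtility := umax
      maxUtility_nonneg := humax
      utility_mem_Icc := hU }
  let σ : stdSimplex ℝ (∀ j, Ωp j → A j) := ⟨Pr, hPr0, hPr1⟩
  have hσ : G.IsVirtualNash σ := ⟨⟨fun i => ⟨g i, hg0 i, hg1 i⟩, hPrform⟩, hvirt⟩
  obtain rfl : P = fun ω α => G.generated σ ω α :=
    funext₂ fun ω α => (hgen ω α).trans (G.generated_apply σ ω α).symm
  obtain ⟨⟨Pc, hPc⟩, hCCE⟩ := statement5_general G hσ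
  exact ⟨⟨fun i v => Pc i v, fun i v => (Pc i v).2.1, fun i v => (Pc i v).2.2, hPc⟩, hCCE⟩
end

section
/- For every stochastic game (with N ≥ 1 players, finite nonempty alphabets and action sets, pmf π, and bounded nonnegative utilities), there exists a conditional probability mass function P that is a NE for the stochastic game. In particular, the set of NE for the stochastic game is nonempty. -/
open Finset

/-!
The agents of the game are the pairs (player, signal), each choosing a mixed action. An equilibrium
among them is a fixed point of Nash's improvement map, since summing the squared gains of an agent
shows that they vanish there. The value `θ i v` is the conditional expectation of player `i`'s
equilibrium payoff given the signal `v` (arbitrary if `v` has probability zero), so the first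
constraint is an equality and the second says that no agent gains by deviating.

Brouwer's theorem rests on Scarf's combinatorial lemma. A set of points is dominant if no point
beats it in all of the given rankings. Call a dominant set of full size a room, and one smaller by a
point a door if it carries all colours but a fixed one. A door lies in exactly two rooms, apart from
one boundary door lying in a single room, while a room that misses a colour has an even number of
doors; by parity some dominant set carries all colours. On the lattice points of a simplex, ranked
by their coordinates, such a set is small, and colouring `x` by a coordinate with `x i ≤ f x i`
makes its points approximate fixed points of `f`.
-/

section Counting

variable {X I : Type*} [DecidableEq X]

theorem sum_card_erase_mem_eq_sum_card_insert_mem [Fintype X] (R D : Finset (Finset X)) :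
    ∑ S ∈ R, #{x ∈ S | S.erase x ∈ D} = ∑ E ∈ D, #{y | y ∉ E ∧ insert y E ∈ R} := by
  simp only [← card_sigma]
  refine card_bij' (fun p _ ↦ ⟨p.1.erase p.2, p.2⟩) (fun p _ ↦ ⟨insert p.2 p.1, p.2⟩) ?_ ?_ ?_ ?_
  all_goals
    rintro ⟨S, x⟩ hx
    simp_all [insert_erase]

variable [DecidableEq I]

theorem image_erase_eq_image {c : X → I} {S : Finset X} {x x' : X} (hx' : x' ∈ S)
    (hne : x' ≠ x) (hc : c x' = c x) : (S.erase x).image c = S.image c := by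
  refine (image_subset_image (erase_subset x S)).antisymm fun i hi ↦ ?_
  obtain ⟨z, hz, rfl⟩ := mem_image.1 hi
  by_cases hzx : z = x
  · exact mem_image.2 ⟨x', mem_erase.2 ⟨hne, hx'⟩, by rw [hc, hzx]⟩
  · exact mem_image_of_mem c (mem_erase.2 ⟨hzx, hz⟩)

theorem card_filter_image_erase_eq_image {c : X → I} {S : Finset X} (hS : #S = #(S.image c) + 1) :
    #{x ∈ S | (S.erase x).image c = S.image c} = 2 := by
  obtain ⟨x, hx, x', hx', hne, hc⟩ :=
    exists_ne_map_eq_of_card_lt_of_maps_to (t := S.image c) (by lia) fun _ ↦ mem_image_of_mem c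
  refine card_eq_two.2 ⟨x, x', hne, ?_⟩
  ext z
  simp only [mem_filter, mem_insert, mem_singleton]
  constructor
  · rintro ⟨hz, himage⟩
    have hinj : Set.InjOn c (S.erase z) := by
      rw [← card_image_iff, himage, card_erase_of_mem hz, hS, Nat.add_sub_cancel]
    by_contra! hzne
    exact hne (hinj (mem_erase.2 ⟨hzne.1.symm, hx⟩) (mem_erase.2 ⟨hzne.2.symm, hx'⟩) hc)
  · rintro (rfl | rfl)
    · exact ⟨hx, image_erase_eq_image hx' hne.symm hc.symm⟩
    · exact ⟨hx', image_erase_eq_image hx hne hc⟩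

theorem even_card_filter_image_erase_eq_erase [Fintype I] {c : X → I} {S : Finset X} (i : I)
    (hS : #S = Fintype.card I) (hc : S.image c ≠ univ) :
    Even #{x ∈ S | (S.erase x).image c = univ.erase i} := by
  by_cases himage : S.image c = univ.erase i
  · rw [← himage, card_filter_image_erase_eq_image]
    · exact even_two
    · rw [himage, card_erase_add_one (mem_univ i), hS, card_univ]
  · rw [filter_false_of_mem fun x _ hx ↦ ?_, card_empty]
    · exact Even.zero
    have hsub : univ.erase i ⊆ S.image c := hx ▸ image_subset_image (erase_subset x S)
    by_cases hi : i ∈ S.image c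
    · exact hc (univ_subset_iff.1 (insert_erase (mem_univ i) ▸ insert_subset hi hsub))
    · exact himage ((subset_erase.2 ⟨subset_univ _, hi⟩).antisymm hsub)

end Counting

section Dominance

variable {X I α : Type*} [LinearOrder α] {v : I → X → α} {S E : Finset X} {i j : I} {x y p : X}

/-- A finite set `S` is *dominant* for a family of rankings `v i` of `X` (Scarf's "primitive set")
if no point of `X` is ranked strictly above the minimum of `S` by all the `v i` at once. -/
def IsDominant (v : I → X → α) (S : Finset X) : Prop :=
  ∀ y, ∃ i, ∀ x ∈ S, v i y ≤ v i x

/-- The points lying strictly above the `v l`-minimum of `E` for every `l` except possibly `i`. -/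
def aboveExcept (v : I → X → α) (E : Finset X) (i : I) : Set X :=
  {y | ∀ l, l ≠ i → ∃ x ∈ E, v l x < v l y}

/-- `y` completes `E` in direction `i` if it is a `v i`-best point of `aboveExcept v E i`; these are
the points whose insertion keeps a dominant set `E` dominant. -/
def IsCompletion (v : I → X → α) (E : Finset X) (i : I) (y : X) : Prop :=
  y ∈ aboveExcept v E i ∧ ∀ z ∈ aboveExcept v E i, v i z ≤ v i y

theorem exists_isCompletion [Finite X] (h : (aboveExcept v E i).Nonempty) :
    ∃ y, IsCompletion v E i y :=
  Set.exists_max_image _ (v i) (Set.toFinite _) h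

theorem IsCompletion.eq (hv : Function.Injective (v i)) (hx : IsCompletion v E i x)
    (hy : IsCompletion v E i y) : x = y :=
  hv ((hy.2 x hx.1).antisymm (hx.2 y hy.1))

namespace IsDominant

theorem mono (hS : IsDominant v S) (hES : E ⊆ S) : IsDominant v E := fun y ↦
  (hS y).imp fun _ h x hx ↦ h x (hES hx)

theorem le_of_mem_aboveExcept (hE : IsDominant v E) (hy : y ∈ aboveExcept v E i) (hx : x ∈ E) :
    v i y ≤ v i x := by
  obtain ⟨l, hl⟩ := hE y
  obtain rfl | hli := eq_or_ne l i
  · exact hl x hx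
  · obtain ⟨z, hz, hlt⟩ := hy l hli
    exact absurd (hl z hz) hlt.not_ge

theorem disjoint_aboveExcept (hE : IsDominant v E) (hij : i ≠ j) :
    Disjoint (aboveExcept v E i) (aboveExcept v E j) := by
  refine Set.disjoint_left.2 fun y hi hj ↦ ?_
  obtain ⟨x, hx, hlt⟩ := hj i hij
  exact (hE.le_of_mem_aboveExcept hi hx).not_gt hlt

theorem exists_range_eq (hv : ∀ i, Function.Injective (v i)) (hS : IsDominant v S)
    (hne : S.Nonempty) :
    ∃ a : I → X, Set.range a = S ∧ ∀ i, ∀ x ∈ S, v i (a i) ≤ v i x := by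
  choose a haS ha using fun i ↦ S.exists_min_image (v i) hne
  refine ⟨a, Set.Subset.antisymm (Set.range_subset_iff.2 haS) fun x hx ↦ ?_, ha⟩
  obtain ⟨i, hi⟩ := hS x
  exact ⟨i, hv i ((ha i x hx).antisymm (hi _ (haS i)))⟩

theorem notMem_of_mem_aboveExcept (hv : Function.Injective (v i)) (hE : IsDominant v E)
    (hij : i ≠ j) (hp : p ∈ E) (hpi : ∀ x ∈ E, v i p ≤ v i x) (hpj : ∀ x ∈ E, v j p ≤ v j x)
    (hy : y ∈ aboveExcept v E i) : y ∉ E := by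
  intro hyE
  obtain rfl : y = p := hv ((hE.le_of_mem_aboveExcept hy hp).antisymm (hpi y hyE))
  obtain ⟨x, hx, hlt⟩ := hy j hij.symm
  exact (hpj x hx).not_gt hlt

variable [DecidableEq X]

theorem insert_of_isCompletion (hE : IsDominant v E) (hy : IsCompletion v E i y) :
    IsDominant v (insert y E) := by
  intro z
  by_cases hz : z ∈ aboveExcept v E i
  · refine ⟨i, forall_mem_insert _ _ _ |>.2 ⟨hy.2 z hz, fun x hx ↦ ?_⟩⟩
    exact hE.le_of_mem_aboveExcept hz hx
  · simp only [aboveExcept, Set.mem_ofPred_eq, not_forall, not_exists, not_and, not_lt] at hz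
    obtain ⟨l, hli, hl⟩ := hz
    obtain ⟨x, hx, hlt⟩ := hy.1 l hli
    exact ⟨l, forall_mem_insert _ _ _ |>.2 ⟨(hl x hx).trans hlt.le, hl⟩⟩

theorem exists_isCompletion_of_insert [Fintype I] (hv : ∀ i, Function.Injective (v i))
    (hyE : y ∉ E) (hcard : #E + 1 = Fintype.card I) (hS : IsDominant v (insert y E)) :
    ∃ k, IsCompletion v E k y ∧ ∀ i j p, i ≠ k → j ≠ k → p ∈ E →
      (∀ x ∈ E, v i p ≤ v i x) → (∀ x ∈ E, v j p ≤ v j x) → i = j := by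
  obtain ⟨a, ha_range, ha_min⟩ := hS.exists_range_eq hv (insert_nonempty y E)
  have ha_inj : Function.Injective a := by
    classical
    have himage : univ.image a = insert y E := coe_injective (by simpa using ha_range)
    rw [← Set.injOn_univ, ← coe_univ, ← card_image_iff, himage, card_insert_of_notMem hyE, hcard,
      card_univ]
  obtain ⟨k, hk⟩ : y ∈ Set.range a := ha_range ▸ mem_insert_self y E
  have haE : ∀ l, l ≠ k → a l ∈ E := fun l hl ↦
    mem_of_mem_insert_of_ne (mem_coe.1 (ha_range ▸ Set.mem_range_self l))
      (hk ▸ ha_inj.ne hl)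
  refine ⟨k, ⟨fun l hl ↦ ⟨a l, haE l hl, ?_⟩, fun z hz ↦ ?_⟩, fun i j p hi hj hp hpi hpj ↦ ?_⟩
  · exact (ha_min l y (mem_insert_self y E)).lt_of_ne ((hv l).ne (hk ▸ ha_inj.ne hl))
  · obtain ⟨l, hl⟩ := hS z
    obtain rfl | hlk := eq_or_ne l k
    · exact hl y (mem_insert_self y E)
    · obtain ⟨x, hx, hlt⟩ := hz l hlk
      exact absurd (hl x (mem_insert_of_mem hx)) hlt.not_ge
  · have hmin_eq : ∀ l, l ≠ k → (∀ x ∈ E, v l p ≤ v l x) → p = a l := fun l hl hpl ↦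
      hv l ((hpl _ (haE l hl)).antisymm (ha_min l p (mem_insert_of_mem hp)))
    exact ha_inj ((hmin_eq i hi hpi).symm.trans (hmin_eq j hj hpj))

theorem exists_pair_isCompletion [Fintype I] (hv : ∀ i, Function.Injective (v i))
    (hE : IsDominant v E) (hne : E.Nonempty) (hcard : #E + 1 = Fintype.card I) :
    ∃ i j, i ≠ j ∧ (∃ p ∈ E, (∀ x ∈ E, v i p ≤ v i x) ∧ ∀ x ∈ E, v j p ≤ v j x) ∧
      ∀ y, (y ∉ E ∧ IsDominant v (insert y E)) ↔ IsCompletion v E i y ∨ IsCompletion v E j y := by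
  obtain ⟨a, ha_range, ha_min⟩ := hE.exists_range_eq hv hne
  have haE : ∀ i, a i ∈ E := fun i ↦ mem_coe.1 (ha_range ▸ Set.mem_range_self i)
  -- Some point of `E` is lowest in two directions, and only in these can `E` be completed.
  obtain ⟨i, -, j, -, hij, haij⟩ := exists_ne_map_eq_of_card_lt_of_maps_to
    (s := univ) (t := E) (f := a) (by rw [card_univ]; lia) fun i _ ↦ haE i
  have haj_min : ∀ x ∈ E, v j (a i) ≤ v j x := haij ▸ ha_min j
  refine ⟨i, j, hij, ⟨a i, haE i, ha_min i, haj_min⟩, fun y ↦ ⟨fun ⟨hyE, hS⟩ ↦ ?_, ?_⟩⟩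
  · obtain ⟨k, hk, hinj⟩ := exists_isCompletion_of_insert hv hyE hcard hS
    obtain rfl | hik := eq_or_ne i k
    · exact Or.inl hk
    obtain rfl | hjk := eq_or_ne j k
    · exact Or.inr hk
    exact absurd (hinj i j (a i) hik hjk (haE i) (ha_min i) haj_min) hij
  · rintro (hy | hy)
    · exact ⟨hE.notMem_of_mem_aboveExcept (hv i) hij (haE i) (ha_min i) haj_min hy.1,
        hE.insert_of_isCompletion hy⟩
    · exact ⟨hE.notMem_of_mem_aboveExcept (hv j) hij.symm (haE i) haj_min (ha_min i) hy.1,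
        hE.insert_of_isCompletion hy⟩

theorem ncard_completions_eq_two [Finite X] [Fintype I] (hv : ∀ i, Function.Injective (v i))
    (hE : IsDominant v E) (hne : E.Nonempty) (hcard : #E + 1 = Fintype.card I)
    (habove : ∀ i, (aboveExcept v E i).Nonempty) :
    {y | y ∉ E ∧ IsDominant v (insert y E)}.ncard = 2 := by
  obtain ⟨i, j, hij, -, hiff⟩ := hE.exists_pair_isCompletion hv hne hcard
  obtain ⟨y, hy⟩ := exists_isCompletion (habove i)
  obtain ⟨z, hz⟩ := exists_isCompletion (habove j)
  refine Set.ncard_eq_two.2 ⟨y, z, ?_, ?_⟩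
  · exact (hE.disjoint_aboveExcept hij).ne_of_mem hy.1 hz.1
  · ext t
    rw [Set.mem_ofPred_eq, hiff]
    exact or_congr ⟨fun ht ↦ ht.eq (hv i) hy, fun ht ↦ ht ▸ hy⟩
      ⟨fun ht ↦ ht.eq (hv j) hz, fun ht ↦ ht ▸ hz⟩

end IsDominant

end Dominance

section Scarf

variable {X I α : Type*} [LinearOrder α] {v : I → X → α} {s : I → X} {i₀ : I} {t : X}

/-- A *slack family* for the rankings `v`: the slack point `s i` is `v i`-worst, while every `v j`
with `j ≠ i` ranks it above all points that are not slack. -/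
structure IsSlackFamily (v : I → X → α) (s : I → X) : Prop where
  le : ∀ i x, v i (s i) ≤ v i x
  lt : ∀ x ∉ Set.range s, ∀ i j, i ≠ j → v j x < v j (s i)

namespace IsSlackFamily

theorem injective (hs : IsSlackFamily v s) (ht : t ∉ Set.range s) : Function.Injective s := by
  intro i j hij
  by_contra hne
  exact (hs.lt t ht i j hne).not_ge (hij ▸ hs.le j t)

theorem nonempty_aboveExcept {E : Finset X} (hs : IsSlackFamily v s) (ht : t ∉ Set.range s)
    (htE : t ∈ E) (i : I) : (aboveExcept v E i).Nonempty :=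
  ⟨s i, fun l hl ↦ ⟨t, htE, hs.lt t ht i l hl.symm⟩⟩

variable [Fintype I] [DecidableEq I]

section

variable [DecidableEq X]

theorem isDominant_image_erase (hs : IsSlackFamily v s) (i₀ : I) :
    IsDominant v ((univ.erase i₀).image s) := by
  intro y
  by_cases hy : y ∈ Set.range s
  · obtain ⟨i, rfl⟩ := hy
    exact ⟨i, fun x _ ↦ hs.le i x⟩
  · refine ⟨i₀, forall_mem_image.2 fun j hj ↦ (hs.lt y hy j i₀ (ne_of_mem_erase hj)).le⟩

theorem card_image_erase_add_one (hs : IsSlackFamily v s) (ht : t ∉ Set.range s) (i₀ : I) :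
    #((univ.erase i₀).image s) + 1 = Fintype.card I := by
  rw [card_image_of_injective _ (hs.injective ht), card_erase_add_one (mem_univ i₀), card_univ]

theorem nonempty_aboveExcept_image_erase (hv : ∀ i, Function.Injective (v i))
    (hs : IsSlackFamily v s) (ht : t ∉ Set.range s) (i₀ : I) :
    (aboveExcept v ((univ.erase i₀).image s) i₀).Nonempty :=
  ⟨t, fun l hl ↦ ⟨s l, mem_image_of_mem s (mem_erase.2 ⟨hl, mem_univ l⟩),
    (hs.le l t).lt_of_ne ((hv l).ne fun h ↦ ht ⟨l, h⟩)⟩⟩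

theorem aboveExcept_image_erase_eq_empty (hs : IsSlackFamily v s) {j : I} (hj : j ≠ i₀)
    (hmin : ∀ x ∈ (univ.erase i₀).image s, v i₀ (s j) ≤ v i₀ x) :
    aboveExcept v ((univ.erase i₀).image s) j = ∅ := by
  refine Set.eq_empty_of_forall_notMem fun y hy ↦ ?_
  obtain ⟨x, hx, hxy⟩ := hy i₀ hj.symm
  by_cases hys : y ∈ Set.range s
  · obtain ⟨k, rfl⟩ := hys
    obtain rfl | hkj := eq_or_ne k j
    · exact (hmin x hx).not_gt hxy
    · obtain ⟨z, -, hz⟩ := hy k hkj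
      exact (hs.le k z).not_gt hz
  · obtain ⟨k, hk, rfl⟩ := mem_image.1 hx
    exact (hs.lt y hys k i₀ (ne_of_mem_erase hk)).not_gt hxy

theorem ncard_completions_image_erase [Finite X] [Nontrivial I]
    (hv : ∀ i, Function.Injective (v i)) (hs : IsSlackFamily v s) (ht : t ∉ Set.range s) (i₀ : I) :
    {y | y ∉ (univ.erase i₀).image s ∧
      IsDominant v (insert y ((univ.erase i₀).image s))}.ncard = 1 := by
  set E := (univ.erase i₀).image s
  have hE : IsDominant v E := hs.isDominant_image_erase i₀
  have hs_mem : ∀ l, l ≠ i₀ → s l ∈ E := fun l hl ↦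
    mem_image_of_mem s (mem_erase.2 ⟨hl, mem_univ l⟩)
  obtain ⟨l₀, hl₀⟩ := exists_ne i₀
  obtain ⟨i, j, hij, ⟨p, hp, hpi, hpj⟩, hiff⟩ := hE.exists_pair_isCompletion hv
    ⟨s l₀, hs_mem l₀ hl₀⟩ (hs.card_image_erase_add_one ht i₀)
  have hmin_eq : ∀ l, l ≠ i₀ → (∀ x ∈ E, v l p ≤ v l x) → p = s l := fun l hl hpl ↦
    hv l ((hpl _ (hs_mem l hl)).antisymm (hs.le l p))
  obtain ⟨y, hy⟩ := exists_isCompletion (hs.nonempty_aboveExcept_image_erase hv ht i₀)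
  have hnot : ∀ l, l ≠ i₀ → (∀ x ∈ E, v l p ≤ v l x) → (∀ x ∈ E, v i₀ p ≤ v i₀ x) →
      ∀ z, ¬ IsCompletion v E l z := fun l hl hpl hp₀ z hz ↦
    (hs.aboveExcept_image_erase_eq_empty hl (hmin_eq l hl hpl ▸ hp₀)).le hz.1
  refine Set.ncard_eq_one.2 ⟨y, Set.ext fun z ↦ ?_⟩
  have hz : IsCompletion v E i₀ z ↔ z = y := ⟨fun hz ↦ hz.eq (hv i₀) hy, fun hz ↦ hz ▸ hy⟩
  rw [Set.mem_ofPred_eq, hiff, Set.mem_singleton_iff, ← hz]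
  obtain rfl | hi := eq_or_ne i i₀
  · exact or_iff_left (hnot j hij.symm hpj hpi z)
  obtain rfl | hj := eq_or_ne j i₀
  · exact or_iff_right (hnot i hi hpi hpj z)
  · exact absurd (hs.injective ht ((hmin_eq i hi hpi).symm.trans (hmin_eq j hj hpj))) hij

theorem even_ncard_completions [Finite X] [Nontrivial I] (hv : ∀ i, Function.Injective (v i))
    (hs : IsSlackFamily v s) {c : X → I} (hc : ∀ i, c (s i) = i) {E : Finset X}
    (hE : IsDominant v E) (hcard : #E + 1 = Fintype.card I) (hcE : E.image c = univ.erase i₀)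
    (hne : E ≠ (univ.erase i₀).image s) :
    Even {y | y ∉ E ∧ IsDominant v (insert y E)}.ncard := by
  obtain ⟨x, hxE, hxs⟩ : ∃ x ∈ E, x ∉ Set.range s := by
    by_contra! hall
    refine hne ?_
    rw [← hcE, image_image]
    refine (image_congr fun x hx ↦ ?_).trans image_id |>.symm
    obtain ⟨i, rfl⟩ := hall x hx
    exact congrArg s (hc i)
  have hEne : E.Nonempty := ⟨x, hxE⟩
  rw [hE.ncard_completions_eq_two hv hEne hcard (hs.nonempty_aboveExcept hxs hxE)]
  exact even_two

end

theorem exists_isDominant_image_eq_univ [Finite X] [Nontrivial I]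
    (hv : ∀ i, Function.Injective (v i)) (hs : IsSlackFamily v s) (ht : t ∉ Set.range s)
    {c : X → I} (hc : ∀ i, c (s i) = i) :
    ∃ S : Finset X, IsDominant v S ∧ S.image c = univ := by
  classical
  have := Fintype.ofFinite X
  by_contra! hnot
  obtain ⟨i₀⟩ : Nonempty I := inferInstance
  let rooms : Finset (Finset X) := {S | #S = Fintype.card I ∧ IsDominant v S}
  let doors : Finset (Finset X) :=
    {E | #E + 1 = Fintype.card I ∧ IsDominant v E ∧ E.image c = univ.erase i₀}
  let E₀ : Finset X := (univ.erase i₀).image s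
  have hE₀ : E₀ ∈ doors := by
    refine mem_filter.2 ⟨mem_univ _, hs.card_image_erase_add_one ht i₀,
      hs.isDominant_image_erase i₀, ?_⟩
    rw [image_image, show c ∘ s = id from funext hc, image_id]
  have hdoors_of_room : ∀ S ∈ rooms, Even #{x ∈ S | S.erase x ∈ doors} := by
    intro S hS
    obtain ⟨hcard, hS⟩ := (mem_filter.1 hS).2
    convert even_card_filter_image_erase_eq_erase i₀ hcard (hnot S hS) using 2
    refine filter_congr fun x hx ↦ ?_
    simp [doors, card_erase_add_one hx, hcard, hS.mono (erase_subset x S)]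
  have hrooms_of_door : ∀ E ∈ doors, #{y | y ∉ E ∧ insert y E ∈ rooms} =
      {y | y ∉ E ∧ IsDominant v (insert y E)}.ncard := by
    intro E hE
    obtain ⟨hcard, -⟩ := (mem_filter.1 hE).2
    rw [← Set.ncard_coe_finset, coe_filter_univ]
    congr! 3 with y
    simp +contextual [rooms, card_insert_of_notMem, hcard]
  have hrest : Even (∑ E ∈ doors.erase E₀, #{y | y ∉ E ∧ insert y E ∈ rooms}) := by
    refine even_sum _ fun E hE ↦ ?_
    obtain ⟨hne, hE⟩ := mem_erase.1 hE
    obtain ⟨hcard, hdom, hcE⟩ := (mem_filter.1 hE).2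
    rw [hrooms_of_door E hE]
    exact hs.even_ncard_completions hv hc hdom hcard hcE hne
  have hsum := sum_card_erase_mem_eq_sum_card_insert_mem rooms doors
  rw [← add_sum_erase _ _ hE₀, hrooms_of_door E₀ hE₀,
    hs.ncard_completions_image_erase hv ht] at hsum
  exact Nat.not_even_iff_odd.2 (hsum ▸ hrest.one_add) (even_sum _ hdoors_of_room)

end IsSlackFamily

end Scarf

section SlackExtension

variable {X I α : Type*} {v : I → X → α}

/-- The rankings `v` extended to `X ⊕ I`, where `Sum.inr` is a slack family: index `i` puts its own
slack point at `⊥` and the other slack points above all of `X`. -/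
def slackExtension [DecidableEq I] (v : I → X → α) (i : I) : X ⊕ I → WithBot (α ⊕ₗ I) :=
  Sum.elim (fun x ↦ WithBot.some (Sum.inlₗ (v i x))) fun j ↦
    if j = i then ⊥ else WithBot.some (Sum.inrₗ j)

theorem slackExtension_inl_le_inl [LinearOrder α] [LinearOrder I] {i : I} {x y : X} :
    slackExtension v i (Sum.inl x) ≤ slackExtension v i (Sum.inl y) ↔ v i x ≤ v i y :=
  WithBot.coe_le_coe.trans Sum.Lex.inl_le_inl_iff

theorem slackExtension_injective [DecidableEq I] (i : I) (hv : Function.Injective (v i)) :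
    Function.Injective (slackExtension v i) := by
  rintro (x | j) (y | k) h <;> simp only [slackExtension, Sum.elim_inl, Sum.elim_inr] at h
  · rw [hv (Sum.inl_injective (toLex.injective (WithBot.coe_injective h)))]
  · split_ifs at h <;> simp at h
  · split_ifs at h <;> simp at h
  · split_ifs at h with hj hk hk <;> simp_all

theorem isSlackFamily_slackExtension [LinearOrder α] [LinearOrder I] :
    IsSlackFamily (slackExtension v) Sum.inr where
  le i x := by simp [slackExtension]
  lt x hx i j hij := by
    rcases x with x | k
    · simp [slackExtension, hij]
    · exact absurd ⟨k, rfl⟩ hx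

end SlackExtension

section Coloring

variable {X I α : Type*} [Finite X] [Finite I] [LinearOrder α] {v : I → X → α}

theorem exists_colored_dominant_of_injective [Nonempty X] [Nontrivial I]
    (hv : ∀ i, Function.Injective (v i)) (c : X → I) :
    ∃ S : Finset X, ∀ y, ∃ z ∈ S, ∀ x ∈ S, v (c z) y ≤ v (c z) x := by
  classical
  have := Fintype.ofFinite I
  let := IsWellOrder.linearOrder (WellOrderingRel (α := I))
  obtain ⟨t⟩ : Nonempty X := inferInstance
  obtain ⟨S, hS, hcS⟩ := isSlackFamily_slackExtension.exists_isDominant_image_eq_univ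
    (fun i ↦ slackExtension_injective i (hv i)) (t := Sum.inl t) (by simp)
    (c := Sum.elim c id) (fun _ ↦ rfl)
  refine ⟨S.toLeft, fun y ↦ ?_⟩
  obtain ⟨i, hi⟩ := hS (Sum.inl y)
  obtain ⟨z | j, hz, rfl⟩ := mem_image.1 (hcS ▸ mem_univ i)
  · exact ⟨z, mem_toLeft.2 hz, fun x hx ↦ slackExtension_inl_le_inl.1 (hi _ (mem_toLeft.1 hx))⟩
  · exact absurd (hi _ hz) (by simp [slackExtension])

theorem exists_colored_dominant (v : I → X → α) (c : X → I) :
    ∃ S : Finset X, ∀ y, ∃ z ∈ S, ∀ x ∈ S, v (c z) y ≤ v (c z) x := by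
  cases isEmpty_or_nonempty X
  · exact ⟨∅, isEmptyElim⟩
  rcases subsingleton_or_nontrivial I with _ | _
  · obtain ⟨t⟩ : Nonempty X := inferInstance
    obtain ⟨z, hz⟩ := Finite.exists_max (v (c t))
    exact ⟨{z}, fun y ↦ ⟨z, mem_singleton_self z, by
      simpa [Subsingleton.elim (c z) (c t)] using hz y⟩⟩
  · -- Ties between rankings are broken by an arbitrary linear order on `X`.
    let := IsWellOrder.linearOrder (WellOrderingRel (α := X))
    let w : I → X → α ×ₗ X := fun i x ↦ toLex (v i x, x)
    have hw : ∀ i, Function.Injective (w i) := fun i x y h ↦ congrArg (fun p ↦ (ofLex p).2) h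
    obtain ⟨S, hS⟩ := exists_colored_dominant_of_injective hw c
    exact ⟨S, fun y ↦ (hS y).imp fun z hz ↦
      ⟨hz.1, fun x hx ↦ Prod.Lex.monotone_fst _ _ (hz.2 x hx)⟩⟩

end Coloring

section Grid

variable {I : Type*} [Fintype I]

theorem exists_ge_sum_eq [Nonempty I] {m : ℕ} {b : I → ℕ} (hb : ∑ i, b i ≤ m) :
    ∃ y : I → ℕ, b ≤ y ∧ ∑ i, y i = m := by
  classical
  obtain ⟨i⟩ : Nonempty I := inferInstance
  refine ⟨b + Pi.single i (m - ∑ i, b i), le_self_add, ?_⟩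
  simp [sum_add_distrib, hb]

theorem exists_colored_dominant_grid (m : ℕ) (c : (I → ℕ) → I) :
    ∃ σ : Finset (I → ℕ), (∀ x ∈ σ, ∑ i, x i = m) ∧
      ∀ y : I → ℕ, ∑ i, y i = m → ∃ z ∈ σ, ∀ x ∈ σ, y (c z) ≤ x (c z) := by
  classical
  obtain ⟨S, hS⟩ := exists_colored_dominant (X := piAntidiag (univ : Finset I) m)
    (fun i x ↦ x.1 i) fun x ↦ c x
  refine ⟨S.map (Function.Embedding.subtype _), forall_mem_map.2 fun x _ ↦ ?_, fun y hy ↦ ?_⟩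
  · exact (mem_piAntidiag.1 x.2).1
  · obtain ⟨z, hz, hle⟩ := hS ⟨y, by simpa using hy⟩
    exact ⟨z, mem_map_of_mem _ hz, forall_mem_map.2 hle⟩

theorem exists_colored_grid_cell [Nonempty I] (m : ℕ) (c : (I → ℕ) → I) :
    ∃ σ : Finset (I → ℕ), σ.Nonempty ∧ (∀ x ∈ σ, ∑ i, x i = m) ∧
      (∀ x ∈ σ, ∀ y ∈ σ, ∀ i, x i < y i + Fintype.card I) ∧
      ∀ i, (∃ x ∈ σ, c x = i) ∨ ∀ x ∈ σ, x i < Fintype.card I := by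
  classical
  obtain ⟨σ, hσ_sum, hσ⟩ := exists_colored_dominant_grid m c
  have hσ_ne : σ.Nonempty := by
    obtain ⟨y, -, hy⟩ := exists_ge_sum_eq (I := I) (b := 0) (m := m) (by simp)
    exact (hσ y hy).imp fun _ h ↦ h.1
  have hmin : ∀ i, ∃ k, (∀ x ∈ σ, k ≤ x i) ∧ if i ∈ σ.image c then ∃ x ∈ σ, x i = k else k = 0 := by
    intro i
    split_ifs with hi
    · obtain ⟨x, hx, hle⟩ := σ.exists_min_image (· i) hσ_ne
      exact ⟨x i, hle, x, hx, rfl⟩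
    · exact ⟨0, fun _ _ ↦ Nat.zero_le _, rfl⟩
  choose a ha_le ha using hmin
  -- Otherwise raising every `a i` by one leaves a point of the grid that beats `σ` in every colour.
  have hsum : m < ∑ i, a i + Fintype.card I := by
    by_contra! hcon
    obtain ⟨y, hay, hy⟩ := exists_ge_sum_eq (b := fun i ↦ a i + 1) (m := m)
      (by simpa [sum_add_distrib] using hcon)
    obtain ⟨z, hz, hle⟩ := hσ y hy
    obtain ⟨x, hx, hxa⟩ := (if_pos (mem_image_of_mem c hz)).mp (ha (c z))
    have := hay (c z)
    have := hle x hx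
    lia
  have hlt : ∀ x ∈ σ, ∀ i, x i < a i + Fintype.card I := by
    intro x hx i
    have hsingle := single_le_sum (f := fun i ↦ x i - a i) (fun _ _ ↦ Nat.zero_le _) (mem_univ i)
    rw [sum_tsub_distrib _ fun i _ ↦ ha_le i x hx, hσ_sum x hx] at hsingle
    have := Fintype.card_pos (α := I)
    lia
  refine ⟨σ, hσ_ne, hσ_sum, fun x hx y hy i ↦ (hlt x hx i).trans_le (by grw [ha_le i y hy]),
    fun i ↦ ?_⟩
  by_cases hi : i ∈ σ.image c
  · exact Or.inl (mem_image.1 hi)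
  · have ha0 : a i = 0 := (if_neg hi).mp (ha i)
    exact Or.inr fun x hx ↦ by simpa [ha0] using hlt x hx i

end Grid

section Brouwer

variable {I : Type*} [Fintype I]

theorem eq_of_mem_stdSimplex_of_le {x y : I → ℝ} (hx : x ∈ stdSimplex ℝ I)
    (hy : y ∈ stdSimplex ℝ I) (h : x ≤ y) : x = y :=
  funext fun i ↦ (sum_eq_sum_iff_of_le fun i _ ↦ h i).1 (hx.2.trans hy.2.symm) i (mem_univ i)

theorem exists_le_of_mem_stdSimplex {x y : I → ℝ} (hx : x ∈ stdSimplex ℝ I)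
    (hy : y ∈ stdSimplex ℝ I) : ∃ i, x i ≤ y i := by
  have : Nonempty I := by
    by_contra! h
    simpa using hx.2
  obtain ⟨i, -, hi⟩ := exists_le_of_sum_le univ_nonempty (hx.2.trans hy.2.symm).le
  exact ⟨i, hi⟩

theorem div_mem_stdSimplex {m : ℕ} (hm : m ≠ 0) {x : I → ℕ} (hx : ∑ i, x i = m) :
    (fun i ↦ (x i / m : ℝ)) ∈ stdSimplex ℝ I := by
  refine ⟨fun i ↦ by positivity, ?_⟩
  rw [← sum_div, ← Nat.cast_sum, hx, div_self (Nat.cast_ne_zero.2 hm)]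

variable [Nonempty I] {f : (I → ℝ) → I → ℝ}

theorem exists_colored_simplex_cell (c : (I → ℝ) → I) {δ : ℝ} (hδ : 0 < δ) :
    ∃ σ ⊆ stdSimplex ℝ I, σ.Nonempty ∧ (∀ x ∈ σ, ∀ y ∈ σ, dist x y < δ) ∧
      ∀ i, (∃ x ∈ σ, c x = i) ∨ ∀ x ∈ σ, x i < δ := by
  obtain ⟨m, hm⟩ := exists_nat_gt (Fintype.card I / δ)
  have hm₀ : (0 : ℝ) < m := lt_of_le_of_lt (by positivity) hm
  have hmδ : Fintype.card I < δ * m := by rwa [div_lt_iff₀' hδ] at hm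
  let r : (I → ℕ) → I → ℝ := fun x i ↦ x i / m
  obtain ⟨σ, hσ_ne, hσ_sum, hσ_diam, hσ_color⟩ := exists_colored_grid_cell m (c ∘ r)
  have hdiam : ∀ x ∈ σ, ∀ y ∈ σ, ∀ i, r x i - r y i < δ := by
    intro x hx y hy i
    have : (x i : ℝ) < y i + Fintype.card I := mod_cast hσ_diam x hx y hy i
    rw [← sub_div, div_lt_iff₀ hm₀]
    linarith
  refine ⟨r '' σ, ?_, (coe_nonempty.2 hσ_ne).image r, ?_, fun i ↦ (hσ_color i).imp ?_ fun hi ↦ ?_⟩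
  · rintro - ⟨x, hx, rfl⟩
    exact div_mem_stdSimplex (Nat.cast_pos.1 hm₀).ne' (hσ_sum x hx)
  · rintro - ⟨x, hx, rfl⟩ - ⟨y, hy, rfl⟩
    exact (dist_pi_lt_iff hδ).2 fun i ↦ abs_sub_lt_iff.2 ⟨hdiam x hx y hy i, hdiam y hy x hx i⟩
  · rintro ⟨x, hx, hxi⟩
    exact ⟨r x, Set.mem_image_of_mem r hx, hxi⟩
  · rintro - ⟨x, hx, rfl⟩
    have : (x i : ℝ) < Fintype.card I := mod_cast hi x hx
    exact (div_lt_iff₀ hm₀).2 (this.trans hmδ)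

theorem exists_forall_le_add_of_mapsTo_stdSimplex (hf : ContinuousOn f (stdSimplex ℝ I))
    (hmaps : Set.MapsTo f (stdSimplex ℝ I) (stdSimplex ℝ I)) {ε : ℝ} (hε : 0 < ε) :
    ∃ x ∈ stdSimplex ℝ I, ∀ i, x i ≤ f x i + ε := by
  have huc := (isCompact_stdSimplex ℝ I).uniformContinuousOn_of_continuous hf
  obtain ⟨δ, hδ, huc⟩ := Metric.uniformContinuousOn_iff.1 huc (ε / 2) (half_pos hε)
  choose! c hc using fun x (hx : x ∈ stdSimplex ℝ I) ↦ exists_le_of_mem_stdSimplex hx (hmaps hx)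
  obtain ⟨σ, hσ, ⟨x, hx⟩, hdiam, hcolors⟩ :=
    exists_colored_simplex_cell c (lt_min hδ (half_pos hε))
  refine ⟨x, hσ hx, fun i ↦ ?_⟩
  obtain ⟨y, hy, rfl⟩ | hi := hcolors i
  · have hxy := lt_min_iff.1 (hdiam x hx y hy)
    have hdom := (abs_lt.1 ((dist_le_pi_dist x y (c y)).trans_lt hxy.2)).2
    have himage := (abs_lt.1 ((dist_le_pi_dist _ _ (c y)).trans_lt
      (huc x (hσ hx) y (hσ hy) hxy.1))).1
    linarith [hc y (hσ hy)]
  · linarith [(lt_min_iff.1 (hi x hx)).2, (hmaps (hσ hx)).1 i]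

theorem exists_isFixedPt_of_mapsTo_stdSimplex (hf : ContinuousOn f (stdSimplex ℝ I))
    (hmaps : Set.MapsTo f (stdSimplex ℝ I) (stdSimplex ℝ I)) :
    ∃ x ∈ stdSimplex ℝ I, Function.IsFixedPt f x := by
  have hcont : ContinuousOn (fun x ↦ univ.sup' univ_nonempty fun i ↦ x i - f x i)
      (stdSimplex ℝ I) :=
    ContinuousOn.finset_sup'_apply _ fun i _ ↦
      (continuous_apply i).continuousOn.sub (continuousOn_pi.1 hf i)
  obtain ⟨x₀, hx₀, -⟩ := exists_forall_le_add_of_mapsTo_stdSimplex hf hmaps one_pos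
  obtain ⟨x, hx, hmin⟩ := (isCompact_stdSimplex ℝ I).exists_isMinOn ⟨x₀, hx₀⟩ hcont
  refine ⟨x, hx, (eq_of_mem_stdSimplex_of_le hx (hmaps hx) fun i ↦ ?_).symm⟩
  refine le_of_forall_pos_le_add fun ε hε ↦ ?_
  obtain ⟨y, hy, hyε⟩ := exists_forall_le_add_of_mapsTo_stdSimplex hf hmaps hε
  have hyε' : univ.sup' univ_nonempty (fun i ↦ y i - f y i) ≤ ε :=
    sup'_le _ _ fun i _ ↦ sub_le_iff_le_add'.2 (hyε i)
  exact sub_le_iff_le_add'.1 <|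
    (le_sup' (fun i ↦ x i - f x i) (mem_univ i)).trans ((hmin hy).trans hyε')

end Brouwer

section Retraction

variable {B : Type*} [Fintype B]

/-- A continuous retraction of the nonnegative orthant onto the standard simplex: mass missing from
`u` is spread uniformly, and excess mass is removed by rescaling. -/
noncomputable def simplexRetraction (u : B → ℝ) (b : B) : ℝ :=
  (u b + max 0 (1 - ∑ b', u b') / Fintype.card B) / max 1 (∑ b', u b')

theorem continuous_simplexRetraction :
    Continuous (simplexRetraction : (B → ℝ) → B → ℝ) := by
  unfold simplexRetraction
  refine continuous_pi fun b ↦ Continuous.div (by fun_prop) (by fun_prop) fun u ↦ ?_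
  positivity

theorem simplexRetraction_mem_stdSimplex [Nonempty B] {u : B → ℝ} (hu : 0 ≤ u) :
    simplexRetraction u ∈ stdSimplex ℝ B := by
  refine ⟨fun b ↦ ?_, ?_⟩
  · have : 0 ≤ u b := hu b
    unfold simplexRetraction
    positivity
  · unfold simplexRetraction
    rw [← sum_div, sum_add_distrib, sum_const, card_univ, nsmul_eq_mul,
      mul_div_cancel₀ _ (Nat.cast_ne_zero.2 Fintype.card_ne_zero),
      div_eq_one_iff_eq (by positivity)]
    rcases le_total 1 (∑ b, u b) with h | h <;> simp [h]

theorem simplexRetraction_eq_self {u : B → ℝ} (hu : u ∈ stdSimplex ℝ B) :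
    simplexRetraction u = u := by
  ext b
  simp [simplexRetraction, hu.2]

end Retraction

section ProductBrouwer

variable {J : Type*} {B : J → Type*} [Finite J] [∀ j, Fintype (B j)] [∀ j, Nonempty (B j)]
  {F : (∀ j, B j → ℝ) → ∀ j, B j → ℝ}

theorem exists_isFixedPt_of_mapsTo_pi_stdSimplex
    (hF : ContinuousOn F (Set.univ.pi fun j ↦ stdSimplex ℝ (B j)))
    (hmaps : Set.MapsTo F (Set.univ.pi fun j ↦ stdSimplex ℝ (B j))
      (Set.univ.pi fun j ↦ stdSimplex ℝ (B j))) :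
    ∃ P ∈ Set.univ.pi fun j ↦ stdSimplex ℝ (B j), Function.IsFixedPt F P := by
  have := Fintype.ofFinite J
  cases isEmpty_or_nonempty J
  · exact ⟨0, fun j ↦ isEmptyElim j, Subsingleton.elim _ _⟩
  have : Nonempty (Σ j, B j) := nonempty_sigma.2 ⟨Classical.arbitrary J, inferInstance⟩
  have hJ : (Fintype.card J : ℝ) ≠ 0 := Nat.cast_ne_zero.2 Fintype.card_ne_zero
  let r : ((Σ j, B j) → ℝ) → ∀ j, B j → ℝ := fun x j ↦
    simplexRetraction fun b ↦ Fintype.card J * x ⟨j, b⟩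
  let e : (∀ j, B j → ℝ) → (Σ j, B j) → ℝ := fun P p ↦ P p.1 p.2 / Fintype.card J
  have hr : Continuous r :=
    continuous_pi fun j ↦ continuous_simplexRetraction.comp (by fun_prop)
  have hr_maps : Set.MapsTo r (stdSimplex ℝ (Σ j, B j))
      (Set.univ.pi fun j ↦ stdSimplex ℝ (B j)) := fun x hx j _ ↦
    simplexRetraction_mem_stdSimplex fun b ↦ mul_nonneg (Nat.cast_nonneg _) (hx.1 ⟨j, b⟩)
  have he : Continuous e := by fun_prop
  have he_maps : Set.MapsTo e (Set.univ.pi fun j ↦ stdSimplex ℝ (B j))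
      (stdSimplex ℝ (Σ j, B j)) := by
    refine fun P hP ↦ ⟨fun p ↦ div_nonneg ((hP p.1 trivial).1 p.2) (Nat.cast_nonneg _), ?_⟩
    simp only [e, Fintype.sum_sigma, ← sum_div, (hP _ trivial).2]
    simp [hJ]
  have hre : ∀ P ∈ Set.univ.pi fun j ↦ stdSimplex ℝ (B j), r (e P) = P := fun P hP ↦
    funext fun j ↦ by
      simp only [r, e, mul_div_cancel₀ _ hJ, simplexRetraction_eq_self (hP j trivial)]
  obtain ⟨x, hx, hfix⟩ := exists_isFixedPt_of_mapsTo_stdSimplex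
    (he.comp_continuousOn (hF.comp hr.continuousOn hr_maps))
    (he_maps.comp (hmaps.comp hr_maps))
  refine ⟨r x, hr_maps hx, ?_⟩
  calc F (r x) = r (e (F (r x))) := (hre _ (hmaps (hr_maps hx))).symm
    _ = r x := congrArg r hfix

end ProductBrouwer

section Nash

variable {B : Type*} [Fintype B] {p w : B → ℝ}

/-- Nash's improvement map for one agent with mixed action `p` and payoffs `w`: every action gains
weight in proportion to how much it outperforms the current average payoff. -/
noncomputable def nashUpdate (p w : B → ℝ) (b : B) : ℝ :=
  (p b + max 0 (w b - ∑ b', p b' * w b')) / (1 + ∑ a, max 0 (w a - ∑ b', p b' * w b'))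

theorem continuous_nashUpdate :
    Continuous fun q : (B → ℝ) × (B → ℝ) ↦ nashUpdate q.1 q.2 := by
  unfold nashUpdate
  refine continuous_pi fun b ↦ Continuous.div (by fun_prop) (by fun_prop) fun q ↦ ?_
  positivity

theorem nashUpdate_mem_stdSimplex (hp : p ∈ stdSimplex ℝ B) :
    nashUpdate p w ∈ stdSimplex ℝ B := by
  refine ⟨fun b ↦ ?_, ?_⟩
  · have := hp.1 b
    unfold nashUpdate
    positivity
  · unfold nashUpdate
    rw [← sum_div, sum_add_distrib, hp.2]
    exact div_self (by positivity)

theorem le_sum_of_nashUpdate_eq (hp : p ∈ stdSimplex ℝ B) (hfix : nashUpdate p w = p) (a : B) :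
    w a ≤ ∑ b, p b * w b := by
  set u := ∑ b, p b * w b with hu
  set g : B → ℝ := fun b ↦ max 0 (w b - u) with hg
  have hgain : ∀ b, g b = p b * ∑ a, g a := by
    intro b
    have hb : (p b + g b) / (1 + ∑ a, g a) = p b := congrFun hfix b
    rw [div_eq_iff (by positivity)] at hb
    linarith
  have hsq : ∀ b, g b ^ 2 = g b * (w b - u) := by
    intro b
    rcases le_total 0 (w b - u) with h | h
    · simp [hg, h, sq]
    · simp [hg, h]
  have hexcess : ∑ b, p b * (w b - u) = 0 := by
    simp only [mul_sub, sum_sub_distrib, ← sum_mul, hp.2, one_mul, ← hu, sub_self]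
  have hsum : ∑ b, g b ^ 2 = 0 := by
    calc ∑ b, g b ^ 2 = ∑ b, (∑ a, g a) * (p b * (w b - u)) :=
          sum_congr rfl fun b _ ↦ by rw [hsq, hgain]; ring
      _ = 0 := by rw [← mul_sum, hexcess, mul_zero]
  have ha : g a = 0 :=
    pow_eq_zero_iff two_ne_zero |>.1 ((sum_eq_zero_iff_of_nonneg fun b _ ↦ sq_nonneg _).1 hsum a
      (mem_univ a))
  exact sub_nonpos.1 (max_eq_left_iff.1 ha)

end Nash

section Equilibrium

variable {J : Type*} {B : J → Type*} [Finite J] [∀ j, Fintype (B j)] [∀ j, Nonempty (B j)]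

theorem exists_mixed_equilibrium {W : ∀ j, B j → (∀ j, B j → ℝ) → ℝ}
    (hW : ∀ j b, ContinuousOn (W j b) (Set.univ.pi fun j ↦ stdSimplex ℝ (B j))) :
    ∃ P ∈ Set.univ.pi fun j ↦ stdSimplex ℝ (B j), ∀ j a, W j a P ≤ ∑ b, P j b * W j b P := by
  obtain ⟨P, hP, hfix⟩ := exists_isFixedPt_of_mapsTo_pi_stdSimplex
    (F := fun P j ↦ nashUpdate (P j) fun b ↦ W j b P)
    (continuousOn_pi.2 fun j ↦ continuous_nashUpdate.comp_continuousOn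
      ((continuous_apply j).continuousOn.prodMk (continuousOn_pi.2 (hW j))))
    (fun P hP j _ ↦ nashUpdate_mem_stdSimplex (hP j trivial))
  exact ⟨P, hP, fun j ↦ le_sum_of_nashUpdate_eq (hP j trivial) (congrFun hfix j)⟩

end Equilibrium

section MixedProfile

variable {ι : Type*} {A : ι → Type*} [Fintype ι] {q : ∀ i, A i → ℝ}

/-- The probability of the action profile `α` when the players randomise independently, player `i`
according to `q i`. -/
def mixedProfile (q : ∀ i, A i → ℝ) (α : ∀ i, A i) : ℝ := ∏ i, q i (α i)

variable [DecidableEq ι]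

theorem mul_mixedProfile_eq_mul_mixedProfile_update (q : ∀ i, A i → ℝ) (α : ∀ i, A i) (i : ι)
    (b : A i) :
    q i b * mixedProfile q α = q i (α i) * mixedProfile q (Function.update α i b) := by
  simp only [mixedProfile, Function.apply_update q, prod_update_of_mem (mem_univ i)]
  rw [← mul_prod_erase _ _ (mem_univ i), sdiff_singleton_eq_erase]
  ring

variable [∀ i, Fintype (A i)]

theorem mixedProfile_mem_stdSimplex (hq : ∀ i, q i ∈ stdSimplex ℝ (A i)) :
    mixedProfile q ∈ stdSimplex ℝ (∀ i, A i) := by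
  refine ⟨fun α ↦ prod_nonneg fun i _ ↦ (hq i).1 (α i), ?_⟩
  simp only [mixedProfile, ← Fintype.piFinset_univ, ← prod_univ_sum, (hq _).2, prod_const_one]

theorem sum_mul_sum_mixedProfile_update {i : ι} (hq : ∑ b, q i b = 1) (h : (∀ i, A i) → ℝ) :
    ∑ b, q i b * ∑ α, mixedProfile q α * h (Function.update α i b) =
      ∑ α, mixedProfile q α * h α := by
  have hinv : Function.Involutive fun z : A i × (∀ i, A i) ↦
      (z.2 i, Function.update z.2 i z.1) := fun ⟨b, α⟩ ↦ by simp
  calc ∑ b, q i b * ∑ α, mixedProfile q α * h (Function.update α i b)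
      = ∑ z : A i × (∀ i, A i), q i (z.2 i) *
          (mixedProfile q (Function.update z.2 i z.1) * h (Function.update z.2 i z.1)) := by
        simp only [Fintype.sum_prod_type, mul_sum, ← mul_assoc,
          ← mul_mixedProfile_eq_mul_mixedProfile_update]
    _ = ∑ z : A i × (∀ i, A i), q i z.1 * (mixedProfile q z.2 * h z.2) :=
        Fintype.sum_equiv hinv.toPerm _ _ fun _ ↦ rfl
    _ = ∑ α, mixedProfile q α * h α := by
        simp only [Fintype.sum_prod_type, ← mul_sum, ← sum_mul, hq, one_mul]

end MixedProfile

-- Avoiding division by the total weight lets the conclusion cover signals of probability zero.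
theorem exists_mem_sum_smul_eq_sum_smul {κ E : Type*} [AddCommGroup E] [Module ℝ E] {K : Set E}
    (hK : Convex ℝ K) (hne : K.Nonempty) {s : Finset κ} {w : κ → ℝ} {z : κ → E}
    (hw : ∀ k ∈ s, 0 ≤ w k) (hz : ∀ k ∈ s, z k ∈ K) :
    ∃ t ∈ K, (∑ k ∈ s, w k) • t = ∑ k ∈ s, w k • z k := by
  obtain hpos | hzero := (sum_nonneg hw).lt_or_eq
  · exact ⟨s.centerMass w z, hK.centerMass_mem hw hpos hz, smul_inv_smul₀ hpos.ne' _⟩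
  · obtain ⟨t, ht⟩ := hne
    refine ⟨t, ht, ?_⟩
    have hw₀ := (sum_eq_zero_iff_of_nonneg hw).1 hzero.symm
    rw [← hzero, zero_smul, sum_eq_zero fun k hk ↦ by rw [hw₀ k hk, zero_smul]]

section Interim

variable {ι Ω : Type*} {A S : ι → Type*} [Fintype ι] [DecidableEq ι] [Fintype Ω]
  [∀ i, Fintype (A i)] [∀ i, Nonempty (A i)] [∀ i, Finite (S i)] [∀ i, DecidableEq (S i)]

theorem exists_interim_equilibrium (obs : ∀ i, Ω → S i) (π : Ω → ℝ)
    (U : ι → (∀ i, A i) → Ω → ℝ) :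
    ∃ Q : ∀ i, S i → A i → ℝ, (∀ i s, Q i s ∈ stdSimplex ℝ (A i)) ∧ ∀ i s (β : A i),
      ∑ ω with obs i ω = s, ∑ α, π ω * mixedProfile (fun j ↦ Q j (obs j ω)) α *
          U i (Function.update α i β) ω ≤
        ∑ ω with obs i ω = s, ∑ α, π ω * mixedProfile (fun j ↦ Q j (obs j ω)) α * U i α ω := by
  let W (j : Σ i, S i) (β : A j.1) (P : ∀ j : Σ i, S i, A j.1 → ℝ) : ℝ :=
    ∑ ω with obs j.1 ω = j.2, ∑ α, π ω * mixedProfile (fun i ↦ P ⟨i, obs i ω⟩) α *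
      U j.1 (Function.update α j.1 β) ω
  have hW : ∀ j β, Continuous (W j β) := by
    intro j β
    simp only [W, mixedProfile]
    fun_prop
  obtain ⟨P, hP, hbest⟩ := exists_mixed_equilibrium fun j β ↦ (hW j β).continuousOn
  refine ⟨fun i s ↦ P ⟨i, s⟩, fun i s ↦ hP ⟨i, s⟩ trivial, fun i s β ↦ ?_⟩
  refine (hbest ⟨i, s⟩ β).trans_eq ?_
  simp only [W, mul_sum (s := filter _ _)]
  rw [sum_comm]
  refine sum_congr rfl fun ω hω ↦ ?_
  obtain rfl : obs i ω = s := (mem_filter.1 hω).2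
  simpa only [mul_assoc, mul_left_comm (π ω)] using
    sum_mul_sum_mixedProfile_update (q := fun j ↦ P ⟨j, obs j ω⟩) (hP ⟨i, obs i ω⟩ trivial).2
      fun α ↦ π ω * U i α ω

theorem statement6_general (obs : ∀ i, Ω → S i) {π : Ω → ℝ} (hπ : ∀ ω, 0 ≤ π ω)
    {U : ι → (∀ i, A i) → Ω → ℝ} {K : ι → Set ℝ} (hK : ∀ i, Convex ℝ (K i))
    (hKne : ∀ i, (K i).Nonempty) (hU : ∀ i α ω, U i α ω ∈ K i) :
    ∃ (Q : ∀ i, S i → A i → ℝ) (θ : ∀ i, S i → ℝ),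
      (∀ i s, Q i s ∈ stdSimplex ℝ (A i)) ∧ (∀ i s, θ i s ∈ K i) ∧
      (∀ i, ∑ ω, ∑ α, π ω * mixedProfile (fun j ↦ Q j (obs j ω)) α * θ i (obs i ω) =
        ∑ ω, ∑ α, π ω * mixedProfile (fun j ↦ Q j (obs j ω)) α * U i α ω) ∧
      ∀ i s (β : A i),
        ∑ ω with obs i ω = s, ∑ α, π ω * mixedProfile (fun j ↦ Q j (obs j ω)) α *
            U i (Function.update α i β) ω ≤
          ∑ ω with obs i ω = s, ∑ α, π ω * mixedProfile (fun j ↦ Q j (obs j ω)) α * θ i s := by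
  obtain ⟨Q, hQ, hbest⟩ := exists_interim_equilibrium obs π U
  let P ω := mixedProfile fun j ↦ Q j (obs j ω)
  have hP : ∀ ω α, 0 ≤ P ω α := fun ω ↦
    (mixedProfile_mem_stdSimplex fun j ↦ hQ j (obs j ω)).1
  have hvalue : ∀ i s, ∃ t ∈ K i, ∑ ω with obs i ω = s, ∑ α, π ω * P ω α * t =
      ∑ ω with obs i ω = s, ∑ α, π ω * P ω α * U i α ω := fun i s ↦ by
    simpa only [sum_product, smul_eq_mul, sum_mul] using
      exists_mem_sum_smul_eq_sum_smul (hK i) (hKne i)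
        (s := ({ω | obs i ω = s} : Finset Ω) ×ˢ univ) (w := fun k ↦ π k.1 * P k.1 k.2)
        (fun k _ ↦ mul_nonneg (hπ k.1) (hP k.1 k.2)) fun k _ ↦ hU i k.2 k.1
  choose θ hθ_mem hθ using hvalue
  refine ⟨Q, θ, hQ, hθ_mem, fun i ↦ ?_, fun i s β ↦ (hbest i s β).trans_eq (hθ i s).symm⟩
  have := Fintype.ofFinite (S i)
  rw [← sum_fiberwise univ (obs i), ← sum_fiberwise univ (obs i) fun ω ↦ ∑ α, π ω * P ω α * U i α ω]
  refine sum_congr rfl fun s _ ↦ (sum_congr rfl fun ω hω ↦ ?_).trans (hθ i s)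
  rw [(mem_filter.1 hω).2]

end Interim

/-- Every stochastic game (finite nonempty alphabets/action sets, pmf `π`,
bounded nonnegative utilities) has a conditional pmf `P` that is a NE for the
stochastic game; in particular the set of NE is nonempty. -/
theorem statement6
    (N : ℕ) (hN : 1 ≤ N)
    (Ω0 : Type) (Ωp : Fin N → Type) (A : Fin N → Type)
    [Fintype Ω0] [Nonempty Ω0]
    [∀ i, Fintype (Ωp i)] [∀ i, Nonempty (Ωp i)] [∀ i, DecidableEq (Ωp i)]
    [∀ i, Fintype (A i)] [∀ i, Nonempty (A i)] [∀ i, DecidableEq (A i)]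
    (π : Ω0 × (∀ j, Ωp j) → ℝ)
    (hπ0 : ∀ ω, 0 ≤ π ω) (hπ1 : ∑ ω : Ω0 × (∀ j, Ωp j), π ω = 1)
    (U : ∀ _ : Fin N, (∀ j, A j) → Ω0 × (∀ j, Ωp j) → ℝ)
    (umax : Fin N → ℝ) (humax : ∀ i, 0 ≤ umax i)
    (hU : ∀ i α ω, U i α ω ∈ Set.Icc 0 (umax i)) :
    ∃ P : Ω0 × (∀ j, Ωp j) → (∀ j, A j) → ℝ,
      -- `P` is a conditional pmf
      (∀ ω α, 0 ≤ P ω α) ∧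
      (∀ ω, ∑ α : ∀ j, A j, P ω α = 1) ∧
      -- `P` has product form
      (∃ Pc : ∀ i : Fin N, Ωp i → A i → ℝ,
        (∀ i v a, 0 ≤ Pc i v a) ∧ (∀ i v, ∑ a : A i, Pc i v a = 1) ∧
        (∀ (ω : Ω0 × (∀ j, Ωp j)) (α : ∀ j, A j), P ω α = ∏ i, Pc i (ω.2 i) (α i))) ∧
      -- `P` satisfies the stochastic CCE constraints
      (∃ θ : ∀ i : Fin N, Ωp i → ℝ,
        (∀ i v, θ i v ∈ Set.Icc 0 (umax i)) ∧
        (∀ i : Fin N,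
          ∑ ω : Ω0 × (∀ j, Ωp j), ∑ α : ∀ j, A j, π ω * P ω α * U i α ω ≥
          ∑ ω : Ω0 × (∀ j, Ωp j), ∑ α : ∀ j, A j, π ω * P ω α * θ i (ω.2 i)) ∧
        (∀ (i : Fin N) (v : Ωp i) (β : A i),
          ∑ ω ∈ Finset.univ.filter (fun ω : Ω0 × (∀ j, Ωp j) => ω.2 i = v),
            ∑ α : ∀ j, A j, π ω * P ω α * θ i v ≥
          ∑ ω ∈ Finset.univ.filter (fun ω : Ω0 × (∀ j, Ωp j) => ω.2 i = v),
            ∑ α : ∀ j, A j, π ω * P ω α * U i (Function.update α i β) ω)) := by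
  obtain ⟨Q, θ, hQ, hθ, hsum, hdev⟩ :=
    statement6_general (fun i ω ↦ ω.2 i) hπ0 (fun i ↦ convex_Icc 0 (umax i))
      (fun i ↦ ⟨0, le_rfl, humax i⟩) hU
  have hP (ω : Ω0 × ∀ j, Ωp j) := mixedProfile_mem_stdSimplex fun j ↦ hQ j (ω.2 j)
  exact ⟨fun ω ↦ mixedProfile fun j ↦ Q j (ω.2 j), fun ω ↦ (hP ω).1, fun ω ↦ (hP ω).2,
    ⟨Q, fun i v ↦ (hQ i v).1, fun i v ↦ (hQ i v).2, fun _ _ ↦ rfl⟩,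
    θ, hθ, fun i ↦ (hsum i).le, hdev⟩
end

section
/- Identify each conditional probability mass function P with the point (P(α|ω))_{(ω,α)} of the finite-dimensional real vector space ℝ^{Ω×𝒜}. Then the set of all conditional pmfs P that are CE for the stochastic game is a closed, bounded, convex subset of ℝ^{Ω×𝒜}. -/
open Finset

/-!
The products `π(ω) P(α|ω) θ_i` make the defining conditions bilinear in `(P, θ)`, so neither
closedness nor convexity can be read off from them. Eliminating `θ` makes the conditions linear.
Summing (ii) over the information `(v, c)` of a player, with `β` replaced by any plan `(v, c) ↦ β`,
and then using (i) shows that no plan of deviations beats obedience. Conversely, if no plan does,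
choose for every `(v, c)` a best response and let `θ_i(v, c)` be the conditional mean of its payoff:
this mean stays in the convex set of admissible payoffs, (ii) holds by optimality, and (i) is
the inequality for the plan of best responses. The equilibria are thus cut out of a product of
simplices by weak linear inequalities.
-/

theorem exists_mem_sum_smul_eq_of_convex {𝕜 E X : Type*} [Field 𝕜] [LinearOrder 𝕜]
    [IsStrictOrderedRing 𝕜] [AddCommGroup E] [Module 𝕜 E] {s : Set E} (hs : Convex 𝕜 s)
    (hne : s.Nonempty) {t : Finset X} {w : X → 𝕜} {z : X → E} (hw : ∀ x ∈ t, 0 ≤ w x)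
    (hz : ∀ x ∈ t, z x ∈ s) : ∃ y ∈ s, (∑ x ∈ t, w x) • y = ∑ x ∈ t, w x • z x := by
  rcases (sum_nonneg hw).eq_or_lt with hzero | hpos
  · obtain ⟨y, hy⟩ := hne
    have hw0 := (sum_eq_zero_iff_of_nonneg hw).1 hzero.symm
    refine ⟨y, hy, ?_⟩
    rw [← hzero, zero_smul, sum_eq_zero fun x hx => by rw [hw0 x hx, zero_smul]]
  · exact ⟨t.centerMass w z, hs.centerMass_mem hw hpos hz, smul_inv_smul₀ hpos.ne' _⟩

theorem sum_comp_le_sum_comp_of_fiberwise {X K M : Type*} [Fintype X] [DecidableEq K]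
    [AddCommMonoid M] [PartialOrder M] [IsOrderedAddMonoid M] (k : X → K) {f g : K → X → M}
    (h : ∀ κ, ∑ x with k x = κ, f κ x ≤ ∑ x with k x = κ, g κ x) :
    ∑ x, f (k x) x ≤ ∑ x, g (k x) x := by
  have sum_eq (f : K → X → M) :
      ∑ x, f (k x) x = ∑ κ ∈ univ.image k, ∑ x with k x = κ, f κ x := by
    rw [← sum_fiberwise_of_maps_to fun x _ => mem_image_of_mem k (mem_univ x)]
    refine sum_congr rfl fun κ _ => sum_congr rfl fun x hx => ?_
    rw [(mem_filter.1 hx).2]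
  rw [sum_eq f, sum_eq g]
  exact sum_le_sum fun κ _ => h κ

theorem sum_filter_sum_filter_eq_sum_prod {X Y V C M : Type*} [Fintype X] [Fintype Y]
    [DecidableEq V] [DecidableEq C] [AddCommMonoid M] (g : X → V) (h : Y → C) (v : V) (c : C)
    (f : X × Y → M) :
    ∑ x with g x = v, ∑ y with h y = c, f (x, y) =
      ∑ z with (g z.1, h z.2) = (v, c), f z := by
  simp only [← sum_product, ← filter_product, univ_product_univ, Prod.mk.injEq]

section Player

variable {X K B : Type*} [Fintype X] (k : X → K) (u : X → ℝ) (d : B → X → ℝ) (q : X → ℝ)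

/-- One player's equilibrium conditions in threshold form. The outcome `x` has weight `q x`, reveals
`k x` to the player, and pays `u x` if she obeys and `d b x` if she deviates to `b`. Conditionally
on `κ`, the threshold `θ κ ∈ I` dominates every deviation, and on average obedience pays at least
`θ`. Conditioning is encoded by unnormalized sums over the fibres of `k`. -/
def HasPayoffThreshold [DecidableEq K] (I : Set ℝ) : Prop :=
  ∃ θ : K → ℝ, (∀ κ, θ κ ∈ I) ∧ 0 ≤ ∑ x, q x * (u x - θ (k x)) ∧
    ∀ κ b, ∑ x with k x = κ, q x * d b x ≤ ∑ x with k x = κ, q x * θ κ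

/-- One player's equilibrium conditions in linear form: obedience is at least as good as any plan
choosing a deviation as a function of the player's information `k x`. -/
def IsDeviationProof : Prop :=
  ∀ plan : K → B, ∑ x, q x * d (plan (k x)) x ≤ ∑ x, q x * u x

variable {k u d q}

theorem HasPayoffThreshold.isDeviationProof [DecidableEq K] {I : Set ℝ}
    (h : HasPayoffThreshold k u d q I) : IsDeviationProof k u d q := by
  obtain ⟨θ, -, hobey, hdev⟩ := h
  intro plan
  calc ∑ x, q x * d (plan (k x)) x
      ≤ ∑ x, q x * θ (k x) :=
        sum_comp_le_sum_comp_of_fiberwise k (f := fun κ x => q x * d (plan κ) x)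
          (g := fun κ x => q x * θ κ) fun κ => hdev κ (plan κ)
    _ ≤ ∑ x, q x * u x := by simpa only [mul_sub, sum_sub_distrib, sub_nonneg] using hobey

theorem IsDeviationProof.hasPayoffThreshold [DecidableEq K] [Finite B] [Nonempty B] {I : Set ℝ}
    (h : IsDeviationProof k u d q) (hq : ∀ x, 0 ≤ q x) (hI : Convex ℝ I) (hne : I.Nonempty)
    (hd : ∀ b x, d b x ∈ I) : HasPayoffThreshold k u d q I := by
  choose best hbest using fun κ => Finite.exists_max fun b => ∑ x with k x = κ, q x * d b x
  choose θ hθI hθ using fun κ => exists_mem_sum_smul_eq_of_convex hI hne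
    (t := univ.filter (k · = κ)) (fun x _ => hq x) fun x _ => hd (best κ) x
  replace hθ (κ : K) : ∑ x with k x = κ, q x * θ κ = ∑ x with k x = κ, q x * d (best κ) x := by
    simpa only [smul_eq_mul, sum_mul] using hθ κ
  refine ⟨θ, hθI, ?_, fun κ b => (hbest κ b).trans (hθ κ).ge⟩
  have hobey : ∑ x, q x * θ (k x) ≤ ∑ x, q x * u x :=
    (sum_comp_le_sum_comp_of_fiberwise k (f := fun κ x => q x * θ κ)
      (g := fun κ x => q x * d (best κ) x) fun κ => (hθ κ).le).trans (h best)
  simpa only [mul_sub, sum_sub_distrib, sub_nonneg] using hobey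

theorem hasPayoffThreshold_prod_iff {Y V C : Type*} [Fintype Y] [DecidableEq V] [DecidableEq C]
    (g : X → V) (h : Y → C) (u : X × Y → ℝ) (d : B → X × Y → ℝ) (q : X × Y → ℝ) (I : Set ℝ) :
    HasPayoffThreshold (fun z => (g z.1, h z.2)) u d q I ↔
      ∃ θ : V → C → ℝ, (∀ v c, θ v c ∈ I) ∧
        0 ≤ ∑ x, ∑ y, q (x, y) * (u (x, y) - θ (g x) (h y)) ∧
        ∀ v c b, ∑ x with g x = v, ∑ y with h y = c, q (x, y) * d b (x, y) ≤
          ∑ x with g x = v, ∑ y with h y = c, q (x, y) * θ v c := by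
  refine (Equiv.curry V C ℝ).exists_congr fun θ => ?_
  simp only [Prod.forall, ← sum_filter_sum_filter_eq_sum_prod, Fintype.sum_prod_type]
  rfl

variable (k u d)

theorem isClosed_setOf_isDeviationProof : IsClosed {q | IsDeviationProof k u d q} := by
  simp only [IsDeviationProof, Set.ofPred_forall]
  exact isClosed_iInter fun plan => isClosed_le (by fun_prop) (by fun_prop)

theorem convex_setOf_isDeviationProof : Convex ℝ {q | IsDeviationProof k u d q} := by
  simp only [IsDeviationProof, Set.ofPred_forall]
  refine convex_iInter fun plan => ?_
  have hlin := (Fintype.linearCombination ℝ fun x => d (plan (k x)) x - u x).isLinear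
  simpa only [Fintype.linearCombination_apply, smul_eq_mul, mul_sub, sum_sub_distrib, sub_nonpos]
    using convex_halfSpace_le hlin 0

end Player

section ConditionalPMF

variable (Ω 𝒜 : Type*) [Fintype 𝒜]

/-- The conditional probability mass functions `P(α|ω)`, as points `p (ω, α)` of `ℝ^(Ω × 𝒜)`. -/
def conditionalPMFs : Set (Ω × 𝒜 → ℝ) :=
  {p | ∀ ω, (fun α => p (ω, α)) ∈ stdSimplex ℝ 𝒜}

theorem mem_conditionalPMFs_iff {Ω 𝒜 : Type*} [Fintype 𝒜] {p : Ω × 𝒜 → ℝ} :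
    p ∈ conditionalPMFs Ω 𝒜 ↔ (∀ x, 0 ≤ p x) ∧ ∀ ω, ∑ α, p (ω, α) = 1 := by
  simp only [conditionalPMFs, stdSimplex, Set.mem_ofPred_eq, forall_and, Prod.forall]

theorem isClosed_conditionalPMFs : IsClosed (conditionalPMFs Ω 𝒜) := by
  simp only [conditionalPMFs, Set.ofPred_forall]
  exact isClosed_iInter fun ω => (isClosed_stdSimplex ℝ 𝒜).preimage (by fun_prop)

theorem isBounded_conditionalPMFs : Bornology.IsBounded (conditionalPMFs Ω 𝒜) := by
  refine Bornology.forall_isBounded_image_eval_iff.1 fun x => ?_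
  refine (Metric.isBounded_Icc (0 : ℝ) 1).subset ?_
  rintro _ ⟨p, hp, rfl⟩
  exact mem_Icc_of_mem_stdSimplex (hp x.1) x.2

theorem convex_conditionalPMFs : Convex ℝ (conditionalPMFs Ω 𝒜) := by
  simp only [conditionalPMFs, Set.ofPred_forall]
  exact convex_iInter fun ω =>
    (convex_stdSimplex ℝ 𝒜).linear_preimage (LinearMap.funLeft ℝ ℝ fun α => (ω, α))

end ConditionalPMF

section Game

variable {ι Ω 𝒜 : Type*} {V C B : ι → Type*} [Fintype Ω] [Fintype 𝒜]
  [∀ i, DecidableEq (V i)] [∀ i, DecidableEq (C i)]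

/-- The set of correlated equilibria `p (ω, α) = P(α|ω)`. Player `i` observes `obs i ω`, is
recommended `act i α`, has utility `u i α ω` when everybody obeys and `dev i β α ω` when she alone
deviates to `β`; her thresholds `θ_i(v, c)` range over `I i`. -/
def correlatedEquilibria (obs : ∀ i, Ω → V i) (act : ∀ i, 𝒜 → C i) (π : Ω → ℝ)
    (u : ι → 𝒜 → Ω → ℝ) (dev : ∀ i, B i → 𝒜 → Ω → ℝ) (I : ι → Set ℝ) : Set (Ω × 𝒜 → ℝ) :=
  {p | (∀ x, 0 ≤ p x) ∧ (∀ ω, ∑ α, p (ω, α) = 1) ∧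
    ∃ θ : ∀ i, V i → C i → ℝ, (∀ i v c, θ i v c ∈ I i) ∧
      (∀ i, ∑ ω, ∑ α, π ω * p (ω, α) * (u i α ω - θ i (obs i ω) (act i α)) ≥ 0) ∧
      ∀ i v c β,
        ∑ ω with obs i ω = v, ∑ α with act i α = c, π ω * p (ω, α) * θ i v c ≥
        ∑ ω with obs i ω = v, ∑ α with act i α = c, π ω * p (ω, α) * dev i β α ω}

/-- The joint weight `π(ω) P(α|ω)` of an outcome, as a linear function of `P`. -/
def jointWeight (π : Ω → ℝ) : (Ω × 𝒜 → ℝ) →ₗ[ℝ] (Ω × 𝒜 → ℝ) :=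
  LinearMap.mulLeft ℝ fun x => π x.1

variable (obs : ∀ i, Ω → V i) (act : ∀ i, 𝒜 → C i) {π : Ω → ℝ} (u : ι → 𝒜 → Ω → ℝ)
  (dev : ∀ i, B i → 𝒜 → Ω → ℝ) {I : ι → Set ℝ}

theorem mem_correlatedEquilibria_iff_hasPayoffThreshold {p : Ω × 𝒜 → ℝ} :
    p ∈ correlatedEquilibria obs act π u dev I ↔ p ∈ conditionalPMFs Ω 𝒜 ∧
      ∀ i, HasPayoffThreshold (fun x => (obs i x.1, act i x.2)) (fun x => u i x.2 x.1)
        (fun β x => dev i β x.2 x.1) (jointWeight π p) (I i) := by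
  rw [mem_conditionalPMFs_iff, and_assoc]
  refine and_congr_right fun _ => and_congr_right fun _ => ?_
  simp only [jointWeight, hasPayoffThreshold_prod_iff, Classical.skolem, forall_and]
  rfl

theorem correlatedEquilibria_eq_inter [∀ i, Finite (B i)] [∀ i, Nonempty (B i)]
    (hπ : ∀ ω, 0 ≤ π ω) (hI : ∀ i, Convex ℝ (I i)) (hne : ∀ i, (I i).Nonempty)
    (hdev : ∀ i β α ω, dev i β α ω ∈ I i) :
    correlatedEquilibria obs act π u dev I = conditionalPMFs Ω 𝒜 ∩
      ⋂ i, jointWeight π ⁻¹' {q | IsDeviationProof (fun x => (obs i x.1, act i x.2))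
        (fun x => u i x.2 x.1) (fun β x => dev i β x.2 x.1) q} := by
  ext p
  simp only [mem_correlatedEquilibria_iff_hasPayoffThreshold, Set.mem_inter_iff, Set.mem_iInter,
    Set.mem_preimage, Set.mem_ofPred_eq]
  refine and_congr_right fun hp => forall_congr' fun i => ?_
  have hq (x : Ω × 𝒜) : 0 ≤ jointWeight π p x := mul_nonneg (hπ x.1) ((hp x.1).1 x.2)
  exact ⟨fun h => h.isDeviationProof,
    fun h => h.hasPayoffThreshold hq (hI i) (hne i) fun β x => hdev i β x.2 x.1⟩

theorem statement10_general [∀ i, Finite (B i)] [∀ i, Nonempty (B i)]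
    (hπ : ∀ ω, 0 ≤ π ω) (hI : ∀ i, Convex ℝ (I i)) (hne : ∀ i, (I i).Nonempty)
    (hdev : ∀ i β α ω, dev i β α ω ∈ I i) :
    IsClosed (correlatedEquilibria obs act π u dev I) ∧
      Bornology.IsBounded (correlatedEquilibria obs act π u dev I) ∧
      Convex ℝ (correlatedEquilibria obs act π u dev I) := by
  rw [correlatedEquilibria_eq_inter obs act u dev hπ hI hne hdev]
  refine ⟨?_, (isBounded_conditionalPMFs Ω 𝒜).subset Set.inter_subset_left, ?_⟩
  · exact (isClosed_conditionalPMFs Ω 𝒜).inter <| isClosed_iInter fun i =>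
      (isClosed_setOf_isDeviationProof _ _ _).preimage
        (jointWeight π).continuous_of_finiteDimensional
  · exact (convex_conditionalPMFs Ω 𝒜).inter <| convex_iInter fun i =>
      (convex_setOf_isDeviationProof _ _ _).linear_preimage (jointWeight π)

end Game

/-- Identifying conditional pmfs `P` with points of `ℝ^{Ω×𝒜}`, the set of
all conditional pmfs that are CE for the stochastic game is closed, bounded and
convex. -/
theorem statement10
    (N : ℕ) (hN : 1 ≤ N)
    (Ω0 : Type) (Ωp : Fin N → Type) (A : Fin N → Type)
    [Fintype Ω0] [Nonempty Ω0]
    [∀ i, Fintype (Ωp i)] [∀ i, Nonempty (Ωp i)] [∀ i, DecidableEq (Ωp i)]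
    [∀ i, Fintype (A i)] [∀ i, Nonempty (A i)] [∀ i, DecidableEq (A i)]
    (π : Ω0 × (∀ j, Ωp j) → ℝ)
    (hπ0 : ∀ ω, 0 ≤ π ω) (hπ1 : ∑ ω : Ω0 × (∀ j, Ωp j), π ω = 1)
    (U : ∀ _ : Fin N, (∀ j, A j) → Ω0 × (∀ j, Ωp j) → ℝ)
    (umax : Fin N → ℝ) (humax : ∀ i, 0 ≤ umax i)
    (hU : ∀ i α ω, U i α ω ∈ Set.Icc 0 (umax i))
    (S : Set ((Ω0 × (∀ j, Ωp j)) × (∀ j, A j) → ℝ))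
    (hS : S = {p | (∀ x, 0 ≤ p x) ∧
      (∀ ω : Ω0 × (∀ j, Ωp j), ∑ α : ∀ j, A j, p (ω, α) = 1) ∧
      -- `p` (viewed as a conditional pmf) is a CE for the stochastic game
      (∃ θ : ∀ i : Fin N, Ωp i → A i → ℝ,
        (∀ i v c, θ i v c ∈ Set.Icc 0 (umax i)) ∧
        (∀ i : Fin N,
          ∑ ω : Ω0 × (∀ j, Ωp j), ∑ α : ∀ j, A j,
            π ω * p (ω, α) * (U i α ω - θ i (ω.2 i) (α i)) ≥ 0) ∧
        (∀ (i : Fin N) (v : Ωp i) (c : A i) (β : A i),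
          ∑ ω ∈ Finset.univ.filter (fun ω : Ω0 × (∀ j, Ωp j) => ω.2 i = v),
            ∑ α ∈ Finset.univ.filter (fun α : ∀ j, A j => α i = c),
              π ω * p (ω, α) * θ i v c ≥
          ∑ ω ∈ Finset.univ.filter (fun ω : Ω0 × (∀ j, Ωp j) => ω.2 i = v),
            ∑ α ∈ Finset.univ.filter (fun α : ∀ j, A j => α i = c),
              π ω * p (ω, α) * U i (Function.update α i β) ω))}) :
    IsClosed S ∧ Bornology.IsBounded S ∧ Convex ℝ S := by
  have hCE : S = correlatedEquilibria (fun i ω => ω.2 i) (fun i α => α i) π U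
      (fun i β α => U i (Function.update α i β)) (fun i => Set.Icc 0 (umax i)) := hS
  rw [hCE]
  exact statement10_general _ _ _ _ hπ0 (fun i => convex_Icc 0 (umax i))
    (fun i => ⟨0, le_rfl, humax i⟩) fun i β α ω => hU i (Function.update α i β) ω
end

section
/- A conditional probability mass function P is a CCE for the stochastic game if and only if for every player i ∈ {1,…,N} and every randomized deviation q_i for player i: ∑_{ω∈Ω} ∑_{α∈𝒜} π(ω)P(α|ω)û_i(α, ω) ≥ ∑_{ω∈Ω} ∑_{α∈𝒜} π(ω)P(α|ω) ∑_{β∈A_i} q_i(β|ω_i)û_i((β, α_{-i}), ω). -/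
open Finset

/-!
For a single player, let `M v` be the total weight of the signal `v` and `g v b` the unnormalised
payoff collected on `v` by playing `b`. Both sides of the equivalence say that `∑ v, max_b g v b`
is at most the player's payoff under `P`: the best randomized deviation plays a maximiser of `g v`
on each signal `v`, and the cheapest thresholds are those with `M v * θ v = max_b g v b`.
Such thresholds exist in `[0, u]` since `0 ≤ g v b ≤ M v * u`. The players do not interact, so
their thresholds can be chosen independently.
-/

section StdSimplex

variable {K V B : Type*} [Semiring K] [LinearOrder K] [IsOrderedRing K] [Fintype B] [Nonempty B]

theorem sum_mul_le_sup'_of_mem_stdSimplex {p : B → K} (hp : p ∈ stdSimplex K B) (f : B → K) :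
    ∑ b, p b * f b ≤ univ.sup' univ_nonempty f :=
  calc ∑ b, p b * f b
      ≤ ∑ b, p b * univ.sup' univ_nonempty f :=
        sum_le_sum fun b _ => mul_le_mul_of_nonneg_left (le_sup' f (mem_univ b)) (hp.1 b)
    _ = univ.sup' univ_nonempty f := by rw [← sum_mul, hp.2, one_mul]

theorem exists_mem_stdSimplex_sum_mul_eq_sup' (f : B → K) :
    ∃ p ∈ stdSimplex K B, ∑ b, p b * f b = univ.sup' univ_nonempty f := by
  classical
  obtain ⟨b, -, hb⟩ := exists_mem_eq_sup' univ_nonempty f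
  exact ⟨Pi.single b 1, single_mem_stdSimplex K b, by simp [hb, Pi.single_apply]⟩

theorem forall_mem_stdSimplex_sum_le_iff (T : Finset V) (g : V → B → K) (c : K) :
    (∀ q : V → B → K, (∀ v, q v ∈ stdSimplex K B) → ∑ v ∈ T, ∑ b, q v b * g v b ≤ c) ↔
      ∑ v ∈ T, univ.sup' univ_nonempty (g v) ≤ c := by
  constructor
  · intro h
    choose q hq hmax using fun v => exists_mem_stdSimplex_sum_mul_eq_sup' (g v)
    simpa only [hmax] using h q hq
  · exact fun h q hq =>
      (sum_le_sum fun v _ => sum_mul_le_sup'_of_mem_stdSimplex (hq v) (g v)).trans h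

end StdSimplex

section Threshold

variable {K V B : Type*} [Field K] [LinearOrder K] [IsStrictOrderedRing K]

theorem exists_mem_Icc_mul_eq {m a u : K} (hu : 0 ≤ u) (ha : a ∈ Set.Icc 0 (m * u)) :
    ∃ t ∈ Set.Icc 0 u, m * t = a := by
  obtain ⟨ha_nonneg, ha_le⟩ := ha
  rcases ha_nonneg.eq_or_lt with rfl | ha_pos
  · exact ⟨0, ⟨le_rfl, hu⟩, mul_zero m⟩
  · have hm : 0 < m := pos_of_mul_pos_left (ha_pos.trans_le ha_le) hu
    exact ⟨a / m, ⟨div_nonneg ha_nonneg hm.le, (div_le_iff₀' hm).2 ha_le⟩,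
      mul_div_cancel₀ a hm.ne'⟩

theorem exists_threshold_iff_sum_sup'_le [Fintype B] [Nonempty B] (T : Finset V) {M : V → K}
    {g : V → B → K} {u : K} (hu : 0 ≤ u) (hg : ∀ v b, g v b ∈ Set.Icc 0 (M v * u)) (c : K) :
    (∃ θ : V → K, (∀ v, θ v ∈ Set.Icc 0 u) ∧ ∑ v ∈ T, M v * θ v ≤ c ∧
      ∀ v b, g v b ≤ M v * θ v) ↔
    ∑ v ∈ T, univ.sup' univ_nonempty (g v) ≤ c := by
  constructor
  · rintro ⟨θ, -, hθc, hgθ⟩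
    exact (sum_le_sum fun v _ => sup'_le _ _ fun b _ => hgθ v b).trans hθc
  · intro h
    have hsup (v : V) : univ.sup' univ_nonempty (g v) ∈ Set.Icc 0 (M v * u) := by
      obtain ⟨b, -, hb⟩ := exists_mem_eq_sup' univ_nonempty (g v)
      exact hb ▸ hg v b
    choose θ hθu hθ using fun v => exists_mem_Icc_mul_eq hu (hsup v)
    refine ⟨θ, hθu, by simpa only [hθ] using h, fun v b => ?_⟩
    exact (hθ v).symm ▸ le_sup' (g v) (mem_univ b)

end Threshold

section Signal

variable {K Ω S V B : Type*} [Fintype Ω] [Fintype S] [DecidableEq V]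

/-- The total weight of the states `ω` carrying the signal `v = s ω`, where `w ω a` is the joint
weight, not necessarily normalised, of the state `ω` and the action profile `a`. -/
def signalMass [AddCommMonoid K] (w : Ω → S → K) (s : Ω → V) (v : V) : K :=
  ∑ ω with s ω = v, ∑ a, w ω a

/-- The contribution of the signal `v` to the expected value of the payoff `f`. It is not divided
by `signalMass w s v`, so signals of weight zero need no special treatment. -/
def signalPayoff [NonUnitalNonAssocSemiring K] (w : Ω → S → K) (s : Ω → V) (f : S → Ω → K)
    (v : V) : K :=
  ∑ ω with s ω = v, ∑ a, w ω a * f a ω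

theorem signalPayoff_const [NonUnitalNonAssocSemiring K] (w : Ω → S → K) (s : Ω → V) (v : V)
    (t : K) : signalPayoff w s (fun _ _ => t) v = signalMass w s v * t := by
  simp only [signalPayoff, signalMass, sum_mul]

theorem sum_mul_comp_signal [NonUnitalNonAssocSemiring K] (w : Ω → S → K) (s : Ω → V)
    (θ : V → K) :
    ∑ ω, ∑ a, w ω a * θ (s ω) = ∑ v ∈ univ.image s, signalMass w s v * θ v := by
  rw [← sum_fiberwise_of_maps_to fun ω _ => mem_image_of_mem s (mem_univ ω)]
  refine sum_congr rfl fun v _ => ?_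
  rw [← signalPayoff_const]
  refine sum_congr rfl fun ω hω => ?_
  rw [(mem_filter.1 hω).2]

theorem sum_mul_sum_signal [CommSemiring K] [Fintype B] (w : Ω → S → K) (s : Ω → V)
    (G : B → S → Ω → K) (q : V → B → K) :
    ∑ ω, ∑ a, w ω a * ∑ b, q (s ω) b * G b a ω =
      ∑ v ∈ univ.image s, ∑ b, q v b * signalPayoff w s (G b) v := by
  rw [← sum_fiberwise_of_maps_to fun ω _ => mem_image_of_mem s (mem_univ ω)]
  refine sum_congr rfl fun v _ => ?_
  calc ∑ ω with s ω = v, ∑ a, w ω a * ∑ b, q (s ω) b * G b a ω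
      = ∑ ω with s ω = v, ∑ a, ∑ b, q v b * (w ω a * G b a ω) := by
        refine sum_congr rfl fun ω hω => ?_
        simp only [(mem_filter.1 hω).2, mul_sum, mul_left_comm]
    _ = ∑ b, ∑ ω with s ω = v, ∑ a, q v b * (w ω a * G b a ω) :=
        (sum_congr rfl fun ω _ => sum_comm).trans sum_comm
    _ = ∑ b, q v b * signalPayoff w s (G b) v := by simp only [signalPayoff, mul_sum]

theorem signalPayoff_mem_Icc [Semiring K] [PartialOrder K] [IsOrderedRing K] {w : Ω → S → K}
    (hw : ∀ ω a, 0 ≤ w ω a) (s : Ω → V) {f : S → Ω → K} {u : K}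
    (hf : ∀ a ω, f a ω ∈ Set.Icc 0 u) (v : V) :
    signalPayoff w s f v ∈ Set.Icc 0 (signalMass w s v * u) := by
  rw [← signalPayoff_const]
  exact ⟨sum_nonneg fun ω _ => sum_nonneg fun a _ => mul_nonneg (hw ω a) (hf a ω).1,
    sum_le_sum fun ω _ => sum_le_sum fun a _ => mul_le_mul_of_nonneg_left (hf a ω).2 (hw ω a)⟩

end Signal

section Equilibrium

variable {K Ω S : Type*} [Field K] [LinearOrder K] [IsStrictOrderedRing K]
  [Fintype Ω] [Fintype S]

theorem exists_threshold_iff_forall_randomized_le {V B : Type*} [DecidableEq V] [Fintype B]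
    [Nonempty B] {w : Ω → S → K} (hw : ∀ ω a, 0 ≤ w ω a) (s : Ω → V) {G : B → S → Ω → K}
    {u : K} (hu : 0 ≤ u) (hG : ∀ b a ω, G b a ω ∈ Set.Icc 0 u) (c : K) :
    (∃ θ : V → K, (∀ v, θ v ∈ Set.Icc 0 u) ∧ ∑ ω, ∑ a, w ω a * θ (s ω) ≤ c ∧
      ∀ v b, ∑ ω with s ω = v, ∑ a, w ω a * G b a ω ≤ ∑ ω with s ω = v, ∑ a, w ω a * θ v) ↔
    ∀ q : V → B → K, (∀ v, q v ∈ stdSimplex K B) →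
      ∑ ω, ∑ a, w ω a * ∑ b, q (s ω) b * G b a ω ≤ c := by
  have hg (v : V) (b : B) := signalPayoff_mem_Icc hw s (hG b) v
  have hthreshold := exists_threshold_iff_sum_sup'_le (univ.image s) hu hg c
  have hrandomized := forall_mem_stdSimplex_sum_le_iff (univ.image s)
    (fun v b => signalPayoff w s (G b) v) c
  simp only [← sum_mul_comp_signal] at hthreshold
  simp only [← signalPayoff_const] at hthreshold
  simp only [← sum_mul_sum_signal] at hrandomized
  exact hthreshold.trans hrandomized.symm

theorem statement11_general {ι : Type*} {V B : ι → Type*} [∀ i, DecidableEq (V i)]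
    [∀ i, Fintype (B i)] [∀ i, Nonempty (B i)] {w : Ω → S → K} (hw : ∀ ω a, 0 ≤ w ω a)
    (s : ∀ i, Ω → V i) {G : ∀ i, B i → S → Ω → K} {u : ι → K} (hu : ∀ i, 0 ≤ u i)
    (hG : ∀ i b a ω, G i b a ω ∈ Set.Icc 0 (u i)) (c : ι → K) :
    (∃ θ : ∀ i, V i → K, (∀ i v, θ i v ∈ Set.Icc 0 (u i)) ∧
      (∀ i, ∑ ω, ∑ a, w ω a * θ i (s i ω) ≤ c i) ∧
      ∀ i v b, ∑ ω with s i ω = v, ∑ a, w ω a * G i b a ω ≤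
        ∑ ω with s i ω = v, ∑ a, w ω a * θ i v) ↔
    ∀ i (q : V i → B i → K), (∀ v b, 0 ≤ q v b) → (∀ v, ∑ b, q v b = 1) →
      ∑ ω, ∑ a, w ω a * ∑ b, q (s i ω) b * G i b a ω ≤ c i := by
  have hplayer (i : ι) := exists_threshold_iff_forall_randomized_le hw (s i) (hu i) (hG i) (c i)
  simp only [stdSimplex, Set.mem_ofPred_eq, forall_and, and_imp] at hplayer
  simp only [← hplayer, Classical.skolem, forall_and]

end Equilibrium

/-- A conditional pmf `P` is a CCE for the stochastic game iff no player
can improve by any randomized deviation `q i : Ωp i → pmf on A i`. -/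
theorem statement11
    (N : ℕ) (hN : 1 ≤ N)
    (Ω0 : Type) (Ωp : Fin N → Type) (A : Fin N → Type)
    [Fintype Ω0] [Nonempty Ω0]
    [∀ i, Fintype (Ωp i)] [∀ i, Nonempty (Ωp i)] [∀ i, DecidableEq (Ωp i)]
    [∀ i, Fintype (A i)] [∀ i, Nonempty (A i)] [∀ i, DecidableEq (A i)]
    (π : Ω0 × (∀ j, Ωp j) → ℝ)
    (hπ0 : ∀ ω, 0 ≤ π ω) (hπ1 : ∑ ω : Ω0 × (∀ j, Ωp j), π ω = 1)
    (U : ∀ _ : Fin N, (∀ j, A j) → Ω0 × (∀ j, Ωp j) → ℝ)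
    (umax : Fin N → ℝ) (humax : ∀ i, 0 ≤ umax i)
    (hU : ∀ i α ω, U i α ω ∈ Set.Icc 0 (umax i))
    (P : Ω0 × (∀ j, Ωp j) → (∀ j, A j) → ℝ)
    (hP0 : ∀ ω α, 0 ≤ P ω α)
    (hP1 : ∀ ω, ∑ α : ∀ j, A j, P ω α = 1) :
    -- `P` is a CCE for the stochastic game ...
    (∃ θ : ∀ i : Fin N, Ωp i → ℝ,
      (∀ i v, θ i v ∈ Set.Icc 0 (umax i)) ∧
      (∀ i : Fin N,
        ∑ ω : Ω0 × (∀ j, Ωp j), ∑ α : ∀ j, A j, π ω * P ω α * U i α ω ≥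
        ∑ ω : Ω0 × (∀ j, Ωp j), ∑ α : ∀ j, A j, π ω * P ω α * θ i (ω.2 i)) ∧
      (∀ (i : Fin N) (v : Ωp i) (β : A i),
        ∑ ω ∈ Finset.univ.filter (fun ω : Ω0 × (∀ j, Ωp j) => ω.2 i = v),
          ∑ α : ∀ j, A j, π ω * P ω α * θ i v ≥
        ∑ ω ∈ Finset.univ.filter (fun ω : Ω0 × (∀ j, Ωp j) => ω.2 i = v),
          ∑ α : ∀ j, A j, π ω * P ω α * U i (Function.update α i β) ω))
    ↔
    -- ... iff unilateral randomized deviations cannot increase utility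
    (∀ (i : Fin N) (q : Ωp i → A i → ℝ),
      (∀ v β, 0 ≤ q v β) → (∀ v, ∑ β : A i, q v β = 1) →
      ∑ ω : Ω0 × (∀ j, Ωp j), ∑ α : ∀ j, A j, π ω * P ω α * U i α ω ≥
      ∑ ω : Ω0 × (∀ j, Ωp j), ∑ α : ∀ j, A j, π ω * P ω α *
        (∑ β : A i, q (ω.2 i) β * U i (Function.update α i β) ω)) :=
  statement11_general (fun ω α => mul_nonneg (hπ0 ω) (hP0 ω α)) (fun i ω => ω.2 i) humax
    (fun i β α ω => hU i (Function.update α i β) ω) _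
end

section
/- A conditional probability mass function P is a CE for the stochastic game if and only if for every player i ∈ {1,…,N} and every action-aware randomized deviation q_i for player i: ∑_{ω∈Ω} ∑_{α∈𝒜} π(ω)P(α|ω)û_i(α, ω) ≥ ∑_{ω∈Ω} ∑_{α∈𝒜} π(ω)P(α|ω) ∑_{β∈A_i} q_i(β|ω_i, α_i)û_i((β, α_{-i}), ω). -/
/-!
For a fixed player, a threshold that bounds the payoff of every deviation to a fixed action bounds
the payoff of every mixture of them, and averaging over the player's observations gives one
direction. Conversely, play a best response to each observation. This is itself a deviation rule;
taking as threshold the conditional expectation of its payoff dominates every alternative action by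
optimality, and the no-gain hypothesis for this single rule is the bound on the average threshold.
-/

open Finset

section Averages

variable {ι κ M R 𝕜 : Type*}

theorem sum_le_sum_of_forall_sum_fiber_le [AddCommMonoid M] [PartialOrder M]
    [IsOrderedAddMonoid M] [DecidableEq κ] {s : Finset ι} (g : ι → κ) {a b : ι → M}
    (h : ∀ k, ∑ i ∈ s with g i = k, a i ≤ ∑ i ∈ s with g i = k, b i) :
    ∑ i ∈ s, a i ≤ ∑ i ∈ s, b i := by
  have maps_to : ∀ i ∈ s, g i ∈ s.image g := fun _ => mem_image_of_mem g
  rw [← sum_fiberwise_of_maps_to maps_to, ← sum_fiberwise_of_maps_to maps_to]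
  exact sum_le_sum fun k _ => h k

theorem sum_mul_le_of_mem_stdSimplex [Semiring R] [PartialOrder R] [IsOrderedRing R] [Fintype ι]
    {p f : ι → R} {t : R} (hp : p ∈ stdSimplex R ι) (hf : ∀ i, f i ≤ t) : ∑ i, p i * f i ≤ t :=
  calc ∑ i, p i * f i
    _ ≤ ∑ i, p i * t := sum_le_sum fun i _ => mul_le_mul_of_nonneg_left (hf i) (hp.1 i)
    _ = t := by rw [← sum_mul, hp.2, one_mul]

theorem exists_mem_Icc_sum_mul_eq [Field 𝕜] [LinearOrder 𝕜] [IsStrictOrderedRing 𝕜]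
    {s : Finset ι} {w f : ι → 𝕜} {a b : 𝕜} (hab : a ≤ b) (hw : ∀ i ∈ s, 0 ≤ w i)
    (hf : ∀ i ∈ s, f i ∈ Set.Icc a b) :
    ∃ t ∈ Set.Icc a b, ∑ i ∈ s, w i * t = ∑ i ∈ s, w i * f i := by
  rcases (sum_nonneg hw).eq_or_lt with hW | hW
  · have w_eq_zero := (sum_eq_zero_iff_of_nonneg hw).1 hW.symm
    refine ⟨a, Set.left_mem_Icc.2 hab, sum_congr rfl fun i hi => ?_⟩
    rw [w_eq_zero i hi, zero_mul, zero_mul]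
  · refine ⟨s.centerMass w f, (convex_Icc a b).centerMass_mem hw hW hf, ?_⟩
    rw [← sum_mul, centerMass, smul_eq_mul, mul_inv_cancel_left₀ hW.ne']
    simp only [smul_eq_mul]

end Averages

section SingleAgent

variable {R 𝕜 X K C : Type*} [Fintype X] [DecidableEq K]

/-- The deviation inequalities of a correlated equilibrium, for one agent: the outcome `x` has
weight `w x`, the agent observes `obs x`, and switching to action `c` would pay `d c x`. Conditional
on the observation `k`, no fixed action pays more than `θ k`; the condition is multiplied by the
weight of `{x | obs x = k}`, so that it is void for observations of weight zero. -/
def BoundsDeviations [Semiring R] [LE R] (w : X → R) (obs : X → K) (d : C → X → R)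
    (θ : K → R) : Prop :=
  ∀ k c, ∑ x with obs x = k, w x * d c x ≤ ∑ x with obs x = k, w x * θ k

theorem BoundsDeviations.sum_mul_le [CommSemiring R] [PartialOrder R] [IsOrderedRing R]
    [Fintype C] {w : X → R} {obs : X → K} {d : C → X → R} {θ : K → R}
    (hθ : BoundsDeviations w obs d θ) {q : K → C → R} (hq : ∀ k, q k ∈ stdSimplex R C) :
    ∑ x, w x * ∑ c, q (obs x) c * d c x ≤ ∑ x, w x * θ (obs x) := by
  refine sum_le_sum_of_forall_sum_fiber_le obs fun k => ?_
  calc ∑ x with obs x = k, w x * ∑ c, q (obs x) c * d c x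
    _ = ∑ x with obs x = k, ∑ c, q k c * (w x * d c x) := by
      refine sum_congr rfl fun x hx => ?_
      simp only [(mem_filter.1 hx).2, mul_sum, mul_left_comm]
    _ = ∑ c, q k c * ∑ x with obs x = k, w x * d c x := by
      rw [sum_comm]
      simp only [mul_sum]
    _ ≤ ∑ x with obs x = k, w x * θ k := sum_mul_le_of_mem_stdSimplex (hq k) (hθ k)
    _ = ∑ x with obs x = k, w x * θ (obs x) :=
      sum_congr rfl fun x hx => by rw [(mem_filter.1 hx).2]

variable [Field 𝕜] [LinearOrder 𝕜] [IsStrictOrderedRing 𝕜] {w u : X → 𝕜} {obs : X → K}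
  {d : C → X → 𝕜} {a b : 𝕜}

theorem exists_boundsDeviations_le_bestResponse [Finite C] [Nonempty C] (hab : a ≤ b)
    (hw : ∀ x, 0 ≤ w x) (hd : ∀ c x, d c x ∈ Set.Icc a b) :
    ∃ (θ : K → 𝕜) (best : K → C), (∀ k, θ k ∈ Set.Icc a b) ∧ BoundsDeviations w obs d θ ∧
      ∑ x, w x * θ (obs x) ≤ ∑ x, w x * d (best (obs x)) x := by
  choose best best_max using fun k =>
    Finite.exists_max fun c => ∑ x with obs x = k, w x * d c x
  choose θ hθ θ_eq using fun k =>
    exists_mem_Icc_sum_mul_eq (s := univ.filter fun x => obs x = k) hab (fun x _ => hw x)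
      fun x _ => hd (best k) x
  refine ⟨θ, best, hθ, fun k c => (best_max k c).trans_eq (θ_eq k).symm, ?_⟩
  refine sum_le_sum_of_forall_sum_fiber_le obs fun k => le_of_eq ?_
  calc ∑ x with obs x = k, w x * θ (obs x)
    _ = ∑ x with obs x = k, w x * θ k := sum_congr rfl fun x hx => by rw [(mem_filter.1 hx).2]
    _ = ∑ x with obs x = k, w x * d (best k) x := θ_eq k
    _ = ∑ x with obs x = k, w x * d (best (obs x)) x :=
      sum_congr rfl fun x hx => by rw [(mem_filter.1 hx).2]

theorem exists_boundsDeviations_iff_forall_sum_le [Fintype C] [Nonempty C] (hab : a ≤ b)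
    (hw : ∀ x, 0 ≤ w x) (hd : ∀ c x, d c x ∈ Set.Icc a b) :
    (∃ θ : K → 𝕜, (∀ k, θ k ∈ Set.Icc a b) ∧
      ∑ x, w x * θ (obs x) ≤ ∑ x, w x * u x ∧ BoundsDeviations w obs d θ) ↔
    ∀ q : K → C → 𝕜, (∀ k, q k ∈ stdSimplex 𝕜 C) →
      ∑ x, w x * ∑ c, q (obs x) c * d c x ≤ ∑ x, w x * u x := by
  classical
  refine ⟨fun ⟨θ, _, θ_le, hθ⟩ q hq => (hθ.sum_mul_le hq).trans θ_le, fun h => ?_⟩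
  obtain ⟨θ, best, θ_mem, hθ, θ_le⟩ :=
    exists_boundsDeviations_le_bestResponse (obs := obs) hab hw hd
  refine ⟨θ, θ_mem, θ_le.trans ?_, hθ⟩
  simpa [Pi.single_apply] using
    h (fun k => Pi.single (best k) 1) fun k => single_mem_stdSimplex 𝕜 (best k)

end SingleAgent

section Product

theorem sum_filter_prodMap_eq {Ω S V C M : Type*} [Fintype Ω] [Fintype S] [DecidableEq V]
    [DecidableEq C] [AddCommMonoid M] (f : Ω → V) (g : S → C) (v : V) (c : C) (F : Ω × S → M) :
    ∑ x with Prod.map f g x = (v, c), F x =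
      ∑ ω with f ω = v, ∑ s with g s = c, F (ω, s) := by
  rw [← sum_product']
  refine sum_congr ?_ fun _ _ => rfl
  ext x
  simp only [mem_filter_univ, mem_product, Prod.map_apply', Prod.mk.injEq]

variable {𝕜 Ω S V C : Type*} [Field 𝕜] [LinearOrder 𝕜] [IsStrictOrderedRing 𝕜]
  [Fintype Ω] [Fintype S] [DecidableEq V] [Fintype C] [DecidableEq C] [Nonempty C]

theorem exists_thresholds_iff_forall_sum_le (f : Ω → V) (g : S → C) {w u : Ω → S → 𝕜}
    {d : C → Ω → S → 𝕜} {a b : 𝕜} (hab : a ≤ b) (hw : ∀ ω s, 0 ≤ w ω s)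
    (hd : ∀ c ω s, d c ω s ∈ Set.Icc a b) :
    (∃ θ : V → C → 𝕜, (∀ v c, θ v c ∈ Set.Icc a b) ∧
      ∑ ω, ∑ s, w ω s * (u ω s - θ (f ω) (g s)) ≥ 0 ∧
      ∀ v c β, ∑ ω with f ω = v, ∑ s with g s = c, w ω s * θ v c ≥
        ∑ ω with f ω = v, ∑ s with g s = c, w ω s * d β ω s) ↔
    ∀ q : V → C → C → 𝕜, (∀ v c β, 0 ≤ q v c β) → (∀ v c, ∑ β, q v c β = 1) →
      ∑ ω, ∑ s, w ω s * u ω s ≥ ∑ ω, ∑ s, w ω s * ∑ β, q (f ω) (g s) β * d β ω s := by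
  have uncurried := exists_boundsDeviations_iff_forall_sum_le (w := Function.uncurry w)
    (u := Function.uncurry u) (obs := Prod.map f g) (d := fun β => Function.uncurry (d β))
    hab (fun x => hw x.1 x.2) (fun β x => hd β x.1 x.2)
  rw [(Equiv.curry V C 𝕜).symm.surjective.exists,
    (Equiv.curry V C (C → 𝕜)).symm.surjective.forall] at uncurried
  simpa [BoundsDeviations, stdSimplex, Fintype.sum_prod_type, sum_filter_prodMap_eq, mul_sub,
    forall_and] using uncurried

end Product

theorem statement12_general {𝕜 ι Ω : Type*} {V A : ι → Type*} [Field 𝕜] [LinearOrder 𝕜]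
    [IsStrictOrderedRing 𝕜] [Fintype ι] [DecidableEq ι] [Fintype Ω] [∀ i, DecidableEq (V i)]
    [∀ i, Fintype (A i)] [∀ i, Nonempty (A i)] [∀ i, DecidableEq (A i)]
    (obs : ∀ i, Ω → V i) (w : Ω → (∀ j, A j) → 𝕜) (hw : ∀ ω α, 0 ≤ w ω α)
    (U : ι → (∀ j, A j) → Ω → 𝕜) (umin umax : ι → 𝕜) (hu : ∀ i, umin i ≤ umax i)
    (hU : ∀ i α ω, U i α ω ∈ Set.Icc (umin i) (umax i)) :
    (∃ θ : ∀ i, V i → A i → 𝕜,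
      (∀ i v c, θ i v c ∈ Set.Icc (umin i) (umax i)) ∧
      (∀ i, ∑ ω, ∑ α, w ω α * (U i α ω - θ i (obs i ω) (α i)) ≥ 0) ∧
      (∀ i v c β, ∑ ω with obs i ω = v, ∑ α : ∀ j, A j with α i = c, w ω α * θ i v c ≥
        ∑ ω with obs i ω = v, ∑ α : ∀ j, A j with α i = c,
          w ω α * U i (Function.update α i β) ω)) ↔
    ∀ i (q : V i → A i → A i → 𝕜),
      (∀ v c β, 0 ≤ q v c β) → (∀ v c, ∑ β, q v c β = 1) →
      ∑ ω, ∑ α, w ω α * U i α ω ≥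
        ∑ ω, ∑ α, w ω α * ∑ β, q (obs i ω) (α i) β * U i (Function.update α i β) ω := by
  have player_iff i := exists_thresholds_iff_forall_sum_le (obs i) (fun α : ∀ j, A j => α i)
    (u := fun ω α => U i α ω) (d := fun β ω α => U i (Function.update α i β) ω) (hu i) hw
    fun β ω α => hU i (Function.update α i β) ω
  simp only [← player_iff, Classical.skolem, forall_and]

/-- A conditional pmf `P` is a CE for the stochastic game iff no player
can improve by any action-aware randomized deviation `q i : Ωp i → A i → pmf on A i`. -/
theorem statement12
    (N : ℕ) (hN : 1 ≤ N)
    (Ω0 : Type) (Ωp : Fin N → Type) (A : Fin N → Type)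
    [Fintype Ω0] [Nonempty Ω0]
    [∀ i, Fintype (Ωp i)] [∀ i, Nonempty (Ωp i)] [∀ i, DecidableEq (Ωp i)]
    [∀ i, Fintype (A i)] [∀ i, Nonempty (A i)] [∀ i, DecidableEq (A i)]
    (π : Ω0 × (∀ j, Ωp j) → ℝ)
    (hπ0 : ∀ ω, 0 ≤ π ω) (hπ1 : ∑ ω : Ω0 × (∀ j, Ωp j), π ω = 1)
    (U : ∀ _ : Fin N, (∀ j, A j) → Ω0 × (∀ j, Ωp j) → ℝ)
    (umax : Fin N → ℝ) (humax : ∀ i, 0 ≤ umax i)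
    (hU : ∀ i α ω, U i α ω ∈ Set.Icc 0 (umax i))
    (P : Ω0 × (∀ j, Ωp j) → (∀ j, A j) → ℝ)
    (hP0 : ∀ ω α, 0 ≤ P ω α)
    (hP1 : ∀ ω, ∑ α : ∀ j, A j, P ω α = 1) :
    -- `P` is a CE for the stochastic game ...
    (∃ θ : ∀ i : Fin N, Ωp i → A i → ℝ,
      (∀ i v c, θ i v c ∈ Set.Icc 0 (umax i)) ∧
      (∀ i : Fin N,
        ∑ ω : Ω0 × (∀ j, Ωp j), ∑ α : ∀ j, A j,
          π ω * P ω α * (U i α ω - θ i (ω.2 i) (α i)) ≥ 0) ∧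
      (∀ (i : Fin N) (v : Ωp i) (c : A i) (β : A i),
        ∑ ω ∈ Finset.univ.filter (fun ω : Ω0 × (∀ j, Ωp j) => ω.2 i = v),
          ∑ α ∈ Finset.univ.filter (fun α : ∀ j, A j => α i = c),
            π ω * P ω α * θ i v c ≥
        ∑ ω ∈ Finset.univ.filter (fun ω : Ω0 × (∀ j, Ωp j) => ω.2 i = v),
          ∑ α ∈ Finset.univ.filter (fun α : ∀ j, A j => α i = c),
            π ω * P ω α * U i (Function.update α i β) ω))
    ↔
    -- ... iff action-aware unilateral randomized deviations cannot increase utility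
    (∀ (i : Fin N) (q : Ωp i → A i → A i → ℝ),
      (∀ v c β, 0 ≤ q v c β) → (∀ v c, ∑ β : A i, q v c β = 1) →
      ∑ ω : Ω0 × (∀ j, Ωp j), ∑ α : ∀ j, A j, π ω * P ω α * U i α ω ≥
      ∑ ω : Ω0 × (∀ j, Ωp j), ∑ α : ∀ j, A j, π ω * P ω α *
        (∑ β : A i, q (ω.2 i) (α i) β * U i (Function.update α i β) ω)) := by
  exact statement12_general (fun i ω => ω.2 i) (fun ω α => π ω * P ω α)
    (fun ω α => mul_nonneg (hπ0 ω) (hP0 ω α)) U (fun _ => 0) umax humax hU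
end

section
/- (Theorem 1(a), deterministic form.) For all integers T ≥ 1, φ((1/T)∑_{t=0}^{T−1} γ(t)) ≥ φ* − B/V. -/
open Finset

/-! When the drift bound is summed over `t < T`, the differences of `L` telescope; as `L T ≥ 0`,
this bounds the time average of the values `φ (γ t)` from below. Jensen's inequality moves the
average inside `φ`. -/

section

variable {𝕜 : Type*} [Field 𝕜] [LinearOrder 𝕜] [IsStrictOrderedRing 𝕜]

lemma average_le_map_average_of_concaveOn {E β ι : Type*} [AddCommGroup E] [Module 𝕜 E]
    [AddCommGroup β] [PartialOrder β] [IsOrderedAddMonoid β] [Module 𝕜 β]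
    [IsStrictOrderedModule 𝕜 β]
    {s : Set E} {f : E → β} (hf : ConcaveOn 𝕜 s f) {I : Finset ι} (hI : I.Nonempty)
    {p : ι → E} (hp : ∀ i ∈ I, p i ∈ s) :
    (#I : 𝕜)⁻¹ • ∑ i ∈ I, f (p i) ≤ f ((#I : 𝕜)⁻¹ • ∑ i ∈ I, p i) := by
  have weights_sum : ∑ _i ∈ I, (#I : 𝕜)⁻¹ = 1 := by
    rw [sum_const, nsmul_eq_mul, mul_inv_cancel₀ (Nat.cast_ne_zero.2 hI.card_ne_zero)]
  simpa only [smul_sum] using hf.le_map_sum (fun _ _ => by positivity) weights_sum hp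

lemma sub_sub_sum_range_le_of_drift_le {M : Type*} [AddCommGroup M] [PartialOrder M]
    [IsOrderedAddMonoid M] {K : M} {L g : ℕ → M} {T : ℕ}
    (hdrift : ∀ t < T, L (t + 1) - L t - g t ≤ K) :
    L T - L 0 - ∑ t ∈ range T, g t ≤ T • K :=
  calc L T - L 0 - ∑ t ∈ range T, g t
      = ∑ t ∈ range T, (L (t + 1) - L t - g t) := by rw [sum_sub_distrib, sum_range_sub]
    _ ≤ #(range T) • K := sum_le_card_nsmul _ _ _ fun t ht => hdrift t (mem_range.1 ht)
    _ = T • K := by rw [card_range]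

lemma le_average_of_drift_le {V B c : 𝕜} (hV : 0 < V) {L g : ℕ → 𝕜} {T : ℕ} (hT : 1 ≤ T)
    (hLT : 0 ≤ L T) (hdrift : ∀ t < T, L (t + 1) - L t - V * g t ≤ B - V * c) :
    c - B / V - L 0 / (V * T) ≤ (T : 𝕜)⁻¹ * ∑ t ∈ range T, g t := by
  have hT_ne : (T : 𝕜) ≠ 0 := Nat.cast_ne_zero.2 (Nat.one_le_iff_ne_zero.1 hT)
  have summed_drift : L T - L 0 - V * ∑ t ∈ range T, g t ≤ T * (B - V * c) := by
    simpa only [mul_sum, nsmul_eq_mul] using sub_sub_sum_range_le_of_drift_le hdrift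
  calc c - B / V - L 0 / (V * T)
      = ((V * c - B) * T - L 0) / (V * T) := by field_simp
    _ ≤ (V * ∑ t ∈ range T, g t) / (V * T) := by gcongr; linarith
    _ = (T : 𝕜)⁻¹ * ∑ t ∈ range T, g t := by field_simp

theorem statement14_general {E : Type*} [AddCommGroup E] [Module 𝕜 E]
    {s : Set E} {φ : E → 𝕜} (hφ : ConcaveOn 𝕜 s φ)
    {V B φstar : 𝕜} (hV : 0 < V) {L : ℕ → 𝕜} {γ : ℕ → E} {T : ℕ} (hT : 1 ≤ T)
    (hLT : 0 ≤ L T) (hγ : ∀ t < T, γ t ∈ s)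
    (hdrift : ∀ t < T, L (t + 1) - L t - V * φ (γ t) ≤ B - V * φstar) :
    φstar - B / V - L 0 / (V * T) ≤ φ ((T : 𝕜)⁻¹ • ∑ t ∈ range T, γ t) := by
  have jensen := average_le_map_average_of_concaveOn hφ
    (nonempty_range_iff.2 (Nat.one_le_iff_ne_zero.1 hT)) fun t ht => hγ t (mem_range.1 ht)
  rw [card_range] at jensen
  exact (le_average_of_drift_le hV hT hLT hdrift).trans jensen

end

/-- Theorem 1(a), deterministic form: under the per-slot drift bound,
for all `T ≥ 1`, `φ((1/T)∑_{t<T} γ(t)) ≥ φ* − B/V`. -/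
theorem statement14
    (N : ℕ) (hN : 1 ≤ N)
    (umax : Fin N → ℝ) (humax : ∀ i, 0 ≤ umax i)
    (φ : (Fin N → ℝ) → ℝ)
    (hφ : ConcaveOn ℝ {x : Fin N → ℝ | ∀ i, x i ∈ Set.Icc 0 (umax i)} φ)
    (V B φstar : ℝ) (hV : 0 < V) (hB : 0 ≤ B)
    (L : ℕ → ℝ) (hL0 : L 0 = 0) (hLnn : ∀ t, 0 ≤ L t)
    (γ : ℕ → Fin N → ℝ) (hγ : ∀ t i, γ t i ∈ Set.Icc 0 (umax i))
    (hdrift : ∀ t : ℕ, L (t + 1) - L t - V * φ (γ t) ≤ B - V * φstar) :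
    ∀ T : ℕ, 1 ≤ T →
      φ (fun i => (∑ t ∈ Finset.range T, γ t i) / (T : ℝ)) ≥ φstar - B / V := by
  intro T hT
  simpa [hL0, Pi.smul_def, div_eq_inv_mul] using
    statement14_general hφ hV hT (hLnn T) (fun t _ => hγ t) (fun t _ => hdrift t)
end
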